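/- For n ≥ 5, any complex representation of SL_n(ℤ) of dimension less than 2^n − 2 extends to an algebraic representation of SL_n(ℂ). -/

import Mathlib

open Matrix

/-- A representation of `SL_n(ℂ)` is algebraic (rational) if each matrix entry of `ρ(g)`
is a polynomial function of the matrix entries of `g`. -/
def IsAlgebraicSL {n N : ℕ}
    (ρ : Matrix.SpecialLinearGroup (Fin n) ℂ →* GL (Fin N) ℂ) : Prop :=
  ∀ i j : Fin N, ∃ P : MvPolynomial (Fin n × Fin n) ℂ,
    ∀ g : Matrix.SpecialLinearGroup (Fin n) ℂ,
      (ρ g : Matrix (Fin N) (Fin N) ℂ) i j =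
        MvPolynomial.eval (fun q => (g : Matrix (Fin n) (Fin n) ℂ) q.1 q.2) P

/-!
Write `𝐞 hij t` for the elementary matrix `1 + t E_ij`, and let `N < 2 ^ n - 2` be the dimension.

*Unipotence.* If `ρ (𝐞 hij 1)` had an eigenvalue `μ` with `μ ^ 2 ≠ 1`, the `n - 2` Heisenberg groups
with centre `𝐞 hij` would force the generalized eigenspaces of `μ` and of `μ⁻¹` to have dimension at
least `3 ^ (n - 2)` each, so that `2 ^ n < 2 * 3 ^ (n - 2) ≤ N`. Hence `ρ (𝐞 hij 2)` is unipotent.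

*Algebraic part.* The one-parameter groups `t ↦ ρ (𝐞 hij 2) ^ (t / 2)` are polynomial in `t`, so
they inherit the Steinberg relations from the integers. They define a homomorphism on `SL(n, ℂ)` as
soon as a word in the transvections that is trivial in `SL(n, ℂ)` stays trivial in `GL(N, ℂ)`.
Contract such a word along a path: `SL` over the local ring of germs of functions is generated by
transvections, so the contracted word is locally a curve of pairs whose `SL(n, ℂ)`-component is
constant. The logarithmic derivative of its `GL(N, ℂ)`-component is the image of `0` under a Lie
algebra homomorphism, so that component is constant too. The same local lifting shows that the
matrix entries of the homomorphism are locally fractions, hence globally polynomials, in the entries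
of `g`.

*Finite part.* The resulting algebraic `r` agrees with `ρ` on the matrices `𝐞 hij 2`. The quotient
`σ γ = ρ γ * (r γ)⁻¹` commutes with `r`, so it is a homomorphism, and it factors through
`SL(n, ℤ/2)`. In a nontrivial representation of `SL(n, ℤ/2)` of dimension less than `2 ^ n - 2`, the
nontrivial weight spaces of the transvections with a given centre are lines. The relations between
generators `v x z` of these lines, for a fixed `x₀`, make the `2 ^ n - 2` vectors `∑ z, v x z`
with `x ≠ 0, x₀` linearly independent, a contradiction. Hence `σ = 1` and `ρ` is the restriction of
`r`.
-/

namespace SLRep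

open scoped MatrixGroups

open Matrix.SpecialLinearGroup (coe_mul coe_one map_apply_coe transvection_coe transvection_add
  transvection_inv transvection_coeff_zero)

local notation "𝐞" => Matrix.SpecialLinearGroup.transvection

section ElementaryMatrices

variable {n : ℕ} {R : Type*} [CommRing R]

lemma transvection_mul_apply {i j : Fin n} (hij : i ≠ j) (t : R) (g : SL(n, R)) (k l : Fin n) :
    (𝐞 hij t * g) k l = g k l + if k = i then t * g j l else 0 := by
  split_ifs with hk
  · subst hk
    exact Matrix.transvection_mul_apply_same ..
  · rw [add_zero]
    exact Matrix.transvection_mul_apply_of_ne _ _ _ _ hk _ _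

lemma map_transvection {S : Type*} [CommRing S] (f : R →+* S) {i j : Fin n} (hij : i ≠ j) (t : R) :
    Matrix.SpecialLinearGroup.map f (𝐞 hij t) = 𝐞 hij (f t) := by
  ext k l
  simp [map_apply_coe, transvection_coe, Matrix.single_apply,
    Matrix.one_apply, apply_ite f]

lemma transvection_intCast {i j : Fin n} (hij : i ≠ j) (t : R) (m : ℤ) :
    𝐞 hij (m * t) = 𝐞 hij t ^ m := by
  induction m using Int.induction_on with
  | zero => simp
  | succ m ih =>
    rw [_root_.zpow_add_one, ← ih, ← transvection_add]
    push_cast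
    ring_nf
  | pred m ih =>
    rw [_root_.zpow_sub_one, ← ih, transvection_inv, ← transvection_add]
    push_cast
    ring_nf

lemma transvection_mul_comm {i j k l : Fin n} (hij : i ≠ j) (hkl : k ≠ l) (hjk : j ≠ k)
    (hil : i ≠ l) (s t : R) : 𝐞 hij s * 𝐞 hkl t = 𝐞 hkl t * 𝐞 hij s := by
  apply Subtype.ext
  simp only [coe_mul, transvection_coe, mul_add, add_mul,
    mul_one, one_mul, single_mul_single_of_ne _ _ _ _ hjk,
    single_mul_single_of_ne _ _ _ _ hil.symm]
  abel

lemma transvection_mul_transvection {i j k : Fin n} (hij : i ≠ j) (hjk : j ≠ k) (hik : i ≠ k)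
    (s t : R) : 𝐞 hij s * 𝐞 hjk t = 𝐞 hik (s * t) * 𝐞 hjk t * 𝐞 hij s := by
  apply Subtype.ext
  simp only [coe_mul, transvection_coe, mul_add, add_mul,
    mul_one, one_mul, single_mul_single_same, single_mul_single_of_ne _ _ _ _ hjk.symm,
    single_mul_single_of_ne _ _ _ _ hik.symm, zero_mul]
  abel

/-- The subgroup of `SL(n, R)` fixing the first `c` standard basis vectors, i.e. of the matrices
whose first `c` columns are those of the identity. -/
def stdFix (n : ℕ) (R : Type*) [CommRing R] (c : ℕ) : Subgroup SL(n, R) :=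
  fixingSubgroup SL(n, R) ((fun l : Fin n ↦ Pi.single (M := fun _ ↦ R) l 1) '' {l | (l : ℕ) < c})

lemma mem_stdFix {c : ℕ} {g : SL(n, R)} :
    g ∈ stdFix n R c ↔ ∀ l : Fin n, (l : ℕ) < c → ∀ k, g k l = (1 : Matrix _ _ R) k l := by
  simp only [stdFix, mem_fixingSubgroup_iff, Set.forall_mem_image, Set.mem_ofPred_eq,
    Matrix.SpecialLinearGroup.smul_def, smul_eq_mulVec, mulVec_single_one, funext_iff, col_apply,
    one_apply, Pi.single_apply]

lemma transvection_mem_stdFix {c : ℕ} {i j : Fin n} (hij : i ≠ j) (hj : c ≤ j) (t : R) :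
    𝐞 hij t ∈ stdFix n R c := by
  refine mem_stdFix.2 fun l hl k ↦ ?_
  have hjl : j ≠ l := by rintro rfl; omega
  simp [transvection_coe, hjl]

lemma stdFix_eq_bot {c : ℕ} (hc : n ≤ c) : stdFix n R c = ⊥ := by
  refine (Subgroup.eq_bot_iff_forall _).2 fun g hg ↦ Matrix.SpecialLinearGroup.ext _ _ fun k l ↦ ?_
  rw [mem_stdFix.1 hg l (by omega), coe_one]

lemma stdFix_zero : stdFix n R 0 = ⊤ :=
  (Subgroup.eq_top_iff' _).2 fun _ ↦ mem_stdFix.2 fun _ hl ↦ absurd hl (Nat.not_lt_zero _)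

lemma isUnit_pivot {c : Fin n} {g : SL(n, R)} (hg : g ∈ stdFix n R c)
    (hz : ∀ i, c < i → g i c = 0) : IsUnit (g c c) := by
  have hmul : (g⁻¹ * g) c c = 1 := by simp
  rw [coe_mul, mul_apply, Finset.sum_eq_single c] at hmul
  · exact IsUnit.of_mul_eq_one_right _ hmul
  · intro b _ hb
    rcases hb.lt_or_gt with hlt | hgt
    · rw [mem_stdFix.1 (inv_mem hg) b hlt, one_apply_ne hb.symm, zero_mul]
    · rw [hz b hgt, mul_zero]
  · simp

lemma pivot_last_eq_one {c : Fin n} {g : SL(n, R)} (hg : g ∈ stdFix n R c)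
    (hc : (c : ℕ) + 1 = n) : g c c = 1 := by
  have hdet := g.det_coe
  rw [det_of_isUpperTriangular, Finset.prod_eq_single c] at hdet
  · exact hdet
  · intro b _ hb
    rw [mem_stdFix.1 hg b (by have := Fin.val_ne_of_ne hb; omega), one_apply_eq]
  · simp
  · intro i j (hij : j < i)
    rw [mem_stdFix.1 hg j (by omega), one_apply_ne hij.ne']

lemma exists_mul_mem_stdFix_succ {H : Subgroup SL(n, R)} {c : Fin n} {g : SL(n, R)}
    (hg : g ∈ stdFix n R c) (hpivot : g c c = 1) (hH : ∀ k (hk : k ≠ c), 𝐞 hk (g k c) ∈ H) :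
    ∃ h ∈ H, h * g ∈ stdFix n R (c + 1) := by
  have clear : ∀ S : Finset (Fin n), c ∉ S →
      ∃ h ∈ H, h * g ∈ stdFix n R c ∧ ∀ k, (h * g) k c = if k ∈ S then 0 else g k c := by
    intro S
    induction S using Finset.induction_on with
    | empty => exact fun _ ↦ ⟨1, one_mem H, by simpa using hg, by simp⟩
    | insert a S ha ih =>
      intro hc
      rw [Finset.mem_insert, not_or] at hc
      obtain ⟨h, hh, hfix, hcol⟩ := ih hc.2
      refine ⟨(𝐞 (Ne.symm hc.1) (g a c))⁻¹ * h, mul_mem (inv_mem (hH a _)) hh, ?_, fun k ↦ ?_⟩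
      · rw [mul_assoc]
        exact mul_mem (inv_mem (transvection_mem_stdFix _ le_rfl _)) hfix
      · rw [mul_assoc, transvection_inv, transvection_mul_apply, hcol, hcol,
          if_neg hc.2, hpivot]
        by_cases hka : k = a
        · simp [hka, ha]
        · simp [hka]
  obtain ⟨h, hh, hfix, hcol⟩ := clear (Finset.univ.erase c) (by simp)
  refine ⟨h, hh, mem_stdFix.2 fun l hl k ↦ ?_⟩
  rcases Nat.lt_succ_iff_lt_or_eq.1 hl with hl | hl
  · exact mem_stdFix.1 hfix l hl k
  · obtain rfl : l = c := Fin.ext hl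
    rw [hcol]
    by_cases hk : k = l <;> simp [hk, hpivot, one_apply]

/-- Elimination column by column: left multiplication by `H` makes the diagonal entry `1`, after
which transvections clear the rest of the column. -/
theorem stdFix_inf_le {H K : Subgroup SL(n, R)} {c₀ : ℕ}
    (hpivot : ∀ c : Fin n, c₀ ≤ c → ∀ g ∈ stdFix n R c ⊓ K,
      ∃ h ∈ H, h * g ∈ stdFix n R c ⊓ K ∧ (h * g) c c = 1)
    (hclear : ∀ c : Fin n, c₀ ≤ c → ∀ g ∈ K, ∀ k (hk : k ≠ c), 𝐞 hk (g k c) ∈ H ⊓ K) :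
    stdFix n R c₀ ⊓ K ≤ H := by
  suffices ∀ d c, c₀ ≤ c → n ≤ c + d → stdFix n R c ⊓ K ≤ H from
    this n c₀ le_rfl (Nat.le_add_left _ _)
  intro d
  induction d with
  | zero =>
    intro c _ hn
    rw [stdFix_eq_bot (c := c) hn, bot_inf_eq]
    exact bot_le
  | succ d ih =>
    intro c hc₀ hn g hg
    rcases le_or_gt n c with hcn | hcn
    · rw [stdFix_eq_bot hcn, bot_inf_eq] at hg
      exact Subgroup.mem_bot.1 hg ▸ one_mem H
    lift c to Fin n using hcn
    obtain ⟨h, hh, hhg, hone⟩ := hpivot c hc₀ g hg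
    obtain ⟨h', hh', hfix⟩ := exists_mul_mem_stdFix_succ hhg.1 hone (hclear c hc₀ _ hhg.2)
    have hmem := ih (c + 1) (by omega) (by omega) ⟨hfix, mul_mem hh'.2 hhg.2⟩
    exact (H.mul_mem_cancel_left hh).1 ((H.mul_mem_cancel_left hh'.1).1 hmem)

lemma exists_isUnit_of_mem_stdFix [IsLocalRing R] {c : Fin n} {g : SL(n, R)}
    (hg : g ∈ stdFix n R c) : ∃ i, c ≤ i ∧ IsUnit (g i c) := by
  have hmul : (g⁻¹ * g) c c = 1 := by simp
  rw [coe_mul, mul_apply, ← Finset.sum_subset (Finset.subset_univ (Finset.Ici c))] at hmul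
  · obtain ⟨i, hi, hu⟩ := IsLocalRing.exists_of_isUnit_sum (hmul ▸ isUnit_one)
    exact ⟨i, Finset.mem_Ici.1 hi, isUnit_of_mul_isUnit_right hu⟩
  · intro i _ hi
    have hic : i < c := not_le.1 (Finset.mem_Ici.not.1 hi)
    rw [mem_stdFix.1 (inv_mem hg) i hic, one_apply_ne hic.ne', zero_mul]

theorem stdFix_le_of_transvection_mem [IsLocalRing R] {c₀ : ℕ} {H : Subgroup SL(n, R)}
    (hH : ∀ (k l : Fin n) (hkl : k ≠ l) (t : R), c₀ ≤ l → 𝐞 hkl t ∈ H) : stdFix n R c₀ ≤ H := by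
  rw [← inf_top_eq (stdFix n R c₀)]
  refine stdFix_inf_le (fun c hc g hg ↦ ?_) fun c hc g _ k hk ↦ ⟨hH k c hk _ hc, trivial⟩
  have make_one (g : SL(n, R)) (hg : g ∈ stdFix n R c) (i k : Fin n) (hki : k ≠ i) (hi : c ≤ i)
      (hu : IsUnit (g i c)) : ∃ h ∈ H, h * g ∈ stdFix n R c ∧ (h * g) k c = 1 := by
    obtain ⟨v, hv⟩ := hu.exists_left_inv
    refine ⟨𝐞 hki ((1 - g k c) * v), hH _ _ _ _ (by omega),
      mul_mem (transvection_mem_stdFix _ hi _) hg, ?_⟩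
    rw [transvection_mul_apply, if_pos rfl, mul_assoc, hv, mul_one, add_sub_cancel]
  simp only [Subgroup.mem_inf, Subgroup.mem_top, and_true] at hg ⊢
  obtain ⟨i, hci, hu⟩ := exists_isUnit_of_mem_stdFix hg
  rcases hci.eq_or_lt with rfl | hci
  · by_cases hlast : (c : ℕ) + 1 = n
    · exact ⟨1, one_mem H, by simpa using hg, by simpa using pivot_last_eq_one hg hlast⟩
    have hlt : c < (⟨c + 1, by omega⟩ : Fin n) := Nat.lt_succ_self c
    obtain ⟨h, hh, hfix, hone⟩ := make_one g hg c _ hlt.ne' le_rfl hu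
    obtain ⟨h', hh', hfix', hone'⟩ :=
      make_one (h * g) hfix _ c hlt.ne hlt.le (hone.symm.subst isUnit_one)
    rw [← mul_assoc] at hfix' hone'
    exact ⟨h' * h, mul_mem hh' hh, hfix', hone'⟩
  · exact make_one g hg i c hci.ne hci.le hu

theorem eq_top_of_transvection_mem [IsLocalRing R] {H : Subgroup SL(n, R)}
    (hH : ∀ (k l : Fin n) (hkl : k ≠ l) (t : R), 𝐞 hkl t ∈ H) : H = ⊤ := by
  rw [eq_top_iff, ← stdFix_zero]
  exact stdFix_le_of_transvection_mem fun k l hkl t _ ↦ hH k l hkl t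

end ElementaryMatrices

section CongruenceSubgroup

variable {n : ℕ}

/-- The element `e_ij(1) e_ji(-1) e_ij(1)`, which interchanges the `i`-th and `j`-th coordinate
up to sign. -/
def weyl {R : Type*} [CommRing R] {i j : Fin n} (hij : i ≠ j) : SL(n, R) :=
  𝐞 hij 1 * 𝐞 hij.symm (-1) * 𝐞 hij 1

lemma weyl_mul_apply {R : Type*} [CommRing R] {i j : Fin n} (hij : i ≠ j) (g : SL(n, R))
    (k l : Fin n) :
    (weyl hij * g : SL(n, R)) k l = if k = i then g j l else if k = j then -g i l else g k l := by
  simp only [weyl, mul_assoc, transvection_mul_apply]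
  by_cases hki : k = i
  · simp [hki, hij, hij.symm]
  · by_cases hkj : k = j <;> simp [hki, hkj, hij.symm]

lemma weyl_sq_mul_apply {R : Type*} [CommRing R] {i j : Fin n} (hij : i ≠ j) (g : SL(n, R))
    (k l : Fin n) :
    (weyl hij ^ 2 * g : SL(n, R)) k l = if k = i ∨ k = j then -g k l else g k l := by
  rw [sq, mul_assoc]
  simp only [weyl_mul_apply]
  by_cases hki : k = i
  · simp [hki, hij.symm]
  · by_cases hkj : k = j <;> simp [hki, hkj, hij.symm]

/-- Reduction modulo two. -/
abbrev modTwo (n : ℕ) : SL(n, ℤ) →* SL(n, ZMod 2) :=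
  Matrix.SpecialLinearGroup.map (Int.castRingHom (ZMod 2))

lemma mem_ker_modTwo {g : SL(n, ℤ)} :
    g ∈ (modTwo n).ker ↔ ∀ k l, (2 : ℤ) ∣ g k l - (1 : Matrix _ _ ℤ) k l := by
  rw [MonoidHom.mem_ker, Matrix.SpecialLinearGroup.ext_iff]
  refine forall₂_congr fun k l ↦ ?_
  have hdvd := ZMod.intCast_zmod_eq_zero_iff_dvd (g k l - (1 : Matrix _ _ ℤ) k l) 2
  rw [Nat.cast_two, Int.cast_sub, sub_eq_zero] at hdvd
  rw [← hdvd, map_apply_coe, coe_one]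
  simp [one_apply]

lemma transvection_two_mul_mem_ker_modTwo {i j : Fin n} (hij : i ≠ j) (t : ℤ) :
    𝐞 hij (2 * t) ∈ (modTwo n).ker := by
  rw [MonoidHom.mem_ker, map_transvection, map_mul, map_ofNat, show (2 : ZMod 2) = 0 from rfl,
    zero_mul, transvection_coeff_zero]

lemma weyl_sq_mem_ker_modTwo {i j : Fin n} (hij : i ≠ j) : weyl hij ^ 2 ∈ (modTwo n).ker := by
  refine mem_ker_modTwo.2 fun k l ↦ ?_
  rw [← mul_one (weyl hij ^ 2), weyl_sq_mul_apply, coe_one]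
  split_ifs
  · exact ⟨-(1 : Matrix _ _ ℤ) k l, by ring⟩
  · simp

lemma weyl_sq_mem_stdFix {R : Type*} [CommRing R] {c : ℕ} {i j : Fin n} (hij : i ≠ j) (hi : c ≤ i)
    (hj : c ≤ j) : weyl hij ^ 2 ∈ stdFix n R c :=
  pow_mem (mul_mem (mul_mem (transvection_mem_stdFix _ hj _) (transvection_mem_stdFix _ hi _))
    (transvection_mem_stdFix _ hj _)) 2

lemma exists_natAbs_add_lt {a b : ℤ} (ha : ¬ 2 ∣ a) (hb : 2 ∣ b) (hb₀ : b ≠ 0) :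
    ∃ e : ℤ, (a + 2 * e * b).natAbs < a.natAbs ∨ (b + 2 * e * a).natAbs < b.natAbs := by
  by_cases hsign : (0 < a ∧ 0 < b) ∨ (a < 0 ∧ b < 0)
  · exact ⟨-1, by omega⟩
  · exact ⟨1, by omega⟩

/-- The Euclidean algorithm on a column of a matrix in `Γ(2)`: its diagonal entry is odd and the
others are even, so subtracting twice one entry from another can always decrease the column. -/
lemma exists_clear_below {H : Subgroup SL(n, ℤ)}
    (hH : ∀ (k l : Fin n) (hkl : k ≠ l) (t : ℤ), 𝐞 hkl (2 * t) ∈ H) (c : Fin n) (g : SL(n, ℤ))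
    (hg : g ∈ stdFix n ℤ c ⊓ (modTwo n).ker) :
    ∃ h ∈ H, h * g ∈ stdFix n ℤ c ⊓ (modTwo n).ker ∧ ∀ i, c < i → (h * g) i c = 0 := by
  induction hm : ∑ i, (g i c).natAbs using Nat.strong_induction_on generalizing g with
  | _ m ih =>
  subst hm
  by_cases! hex : ∃ i, c < i ∧ g i c ≠ 0
  swap
  · exact ⟨1, one_mem H, by simpa using hg, by simpa using hex⟩
  obtain ⟨i, hi, hne⟩ := hex
  have descend (p q : Fin n) (hpq : p ≠ q) (hq : c ≤ q) (e : ℤ)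
      (hlt : (g p c + 2 * e * g q c).natAbs < (g p c).natAbs) :
      ∃ h ∈ H, h * g ∈ stdFix n ℤ c ⊓ (modTwo n).ker ∧ ∀ i, c < i → (h * g) i c = 0 := by
    have hsum : ∑ i, ((𝐞 hpq (2 * e) * g) i c).natAbs < ∑ i, (g i c).natAbs := by
      refine Finset.sum_lt_sum (fun k _ ↦ ?_) ⟨p, Finset.mem_univ p, ?_⟩
      · rw [transvection_mul_apply]
        split_ifs with hk
        · exact hk ▸ hlt.le
        · simp
      · rwa [transvection_mul_apply, if_pos rfl]
    obtain ⟨h, hh, hmem, hzero⟩ := ih _ hsum (𝐞 hpq (2 * e) * g)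
      (mul_mem ⟨transvection_mem_stdFix _ hq _, transvection_two_mul_mem_ker_modTwo _ _⟩ hg) rfl
    rw [← mul_assoc] at hmem hzero
    exact ⟨_, mul_mem hh (hH _ _ _ _), hmem, hzero⟩
  have heven := mem_ker_modTwo.1 hg.2 i c
  have hodd := mem_ker_modTwo.1 hg.2 c c
  rw [one_apply_ne hi.ne', sub_zero] at heven
  rw [one_apply_eq] at hodd
  obtain ⟨e, he | he⟩ := exists_natAbs_add_lt (a := g c c) (by omega) heven hne
  · exact descend c i hi.ne hi.le e he
  · exact descend i c hi.ne' le_rfl e he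

theorem ker_modTwo_le {H : Subgroup SL(n, ℤ)}
    (hH : ∀ (k l : Fin n) (hkl : k ≠ l) (t : ℤ), 𝐞 hkl (2 * t) ∈ H)
    (hweyl : ∀ (k l : Fin n) (hkl : k ≠ l), weyl hkl ^ 2 ∈ H) : (modTwo n).ker ≤ H := by
  rw [← top_inf_eq (modTwo n).ker, ← stdFix_zero]
  refine stdFix_inf_le (fun c _ g hg ↦ ?_) fun c _ g hg k hk ↦ ?_
  · obtain ⟨h, hh, hmem, hzero⟩ := exists_clear_below hH c g hg
    by_cases hlast : (c : ℕ) + 1 = n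
    · exact ⟨h, hh, hmem, pivot_last_eq_one hmem.1 hlast⟩
    rcases Int.isUnit_iff.1 (isUnit_pivot hmem.1 hzero) with hone | hneg
    · exact ⟨h, hh, hmem, hone⟩
    · have hci : c < (⟨c + 1, by omega⟩ : Fin n) := Nat.lt_succ_self c
      refine ⟨weyl hci.ne ^ 2 * h, mul_mem (hweyl _ _ _) hh, ?_, ?_⟩ <;> rw [mul_assoc]
      · exact mul_mem ⟨weyl_sq_mem_stdFix _ le_rfl hci.le, weyl_sq_mem_ker_modTwo _⟩ hmem
      · rw [weyl_sq_mul_apply, if_pos (Or.inl rfl), hneg, neg_neg]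
  · obtain ⟨m, hm⟩ := mem_ker_modTwo.1 hg k c
    rw [one_apply_ne hk, sub_zero] at hm
    rw [hm]
    exact ⟨hH _ _ _ _, transvection_two_mul_mem_ker_modTwo _ _⟩

lemma map_modTwo_eq_top {H : Subgroup SL(n, ℤ)}
    (hH : ∀ (k l : Fin n) (hkl : k ≠ l) (t : ℤ), 𝐞 hkl t ∈ H) : H.map (modTwo n) = ⊤ := by
  refine eq_top_of_transvection_mem fun k l hkl t ↦ ?_
  obtain ⟨m, rfl⟩ := ZMod.intCast_surjective t
  exact ⟨𝐞 hkl m, hH k l hkl m, map_transvection _ hkl m⟩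

lemma modTwo_surjective : Function.Surjective (modTwo n) := by
  rw [← MonoidHom.range_eq_top, MonoidHom.range_eq_map]
  exact map_modTwo_eq_top fun _ _ _ _ ↦ Subgroup.mem_top _

theorem eq_top_of_transvection_one_mem {H : Subgroup SL(n, ℤ)}
    (hH : ∀ (k l : Fin n) (hkl : k ≠ l), 𝐞 hkl 1 ∈ H) : H = ⊤ := by
  have hmem (k l : Fin n) (hkl : k ≠ l) (t : ℤ) : 𝐞 hkl t ∈ H := by
    rw [← mul_one t, ← Int.cast_id (n := t), transvection_intCast]
    exact zpow_mem (hH k l hkl) t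
  have hker : (modTwo n).ker ≤ H := ker_modTwo_le (fun k l hkl t ↦ hmem k l hkl _) fun k l hkl ↦
    pow_mem (mul_mem (mul_mem (hmem _ _ _ _) (hmem _ _ _ _)) (hmem _ _ _ _)) 2
  exact Subgroup.map_injective_of_ker_le _ hker le_top <|
    (map_modTwo_eq_top hmem).trans (map_modTwo_eq_top fun _ _ _ _ ↦ Subgroup.mem_top _).symm

end CongruenceSubgroup

section Eigenvalues

open Module Module.End

variable {K V : Type*} [Field K] [AddCommGroup V] [Module K V]

lemma finrank_iSup_of_iSupIndep [FiniteDimensional K V] {ι : Type*} [Fintype ι]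
    {p : ι → Submodule K V} (hp : iSupIndep p) :
    finrank K (⨆ i, p i : Submodule K V) = ∑ i, finrank K (p i) := by
  classical
  rw [Submodule.iSup_eq_range_dfinsupp_lsum,
    LinearMap.finrank_range_of_inj hp.dfinsupp_lsum_injective]
  exact Module.finrank_directSum K fun i ↦ p i

lemma isNilpotent_aeval_of_forall_isRoot [IsAlgClosed K] [FiniteDimensional K V] {f : End K V}
    {p : Polynomial K} (hp : ∀ μ, f.HasEigenvalue μ → p.IsRoot μ) :
    IsNilpotent (Polynomial.aeval f p) := by
  suffices h : (Polynomial.aeval f p).maxGenEigenspace 0 = ⊤ by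
    refine ((LinearMap.charpoly_nilpotent_tfae _).out 0 2).2 fun v ↦ ?_
    simpa [mem_maxGenEigenspace] using h.ge (Submodule.mem_top (x := v))
  refine top_unique ((iSup_maxGenEigenspace_eq_top f).ge.trans (iSup_le fun μ v hv ↦ ?_))
  by_cases hμ : f.HasEigenvalue μ
  · obtain ⟨q, rfl⟩ := Polynomial.dvd_iff_isRoot.2 (hp μ hμ)
    obtain ⟨k, hk⟩ := (mem_maxGenEigenspace _ _ _).1 hv
    refine (mem_maxGenEigenspace _ _ _).2 ⟨k, ?_⟩
    have hsplit : Polynomial.aeval f ((Polynomial.X - Polynomial.C μ) * q) ^ k =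
        Polynomial.aeval f (q ^ k) * (f - μ • 1) ^ k := by
      rw [← map_pow, mul_pow, mul_comm, map_mul, map_pow]
      simp [Algebra.algebraMap_eq_smul_one]
    rw [zero_smul, sub_zero, hsplit, Module.End.mul_apply, hk, map_zero]
  · have hbot : f.maxGenEigenspace μ = ⊥ := by
      by_contra hne
      rw [maxGenEigenspace_eq_genEigenspace_finrank] at hne
      exact hμ (hasEigenvalue_of_hasGenEigenvalue hne)
    rw [hbot, Submodule.mem_bot] at hv
    exact hv ▸ zero_mem _

variable {G : Type*} [Group G] (τ : Representation K G V)

lemma mapsTo_eigenspace_mul {x u z : G} (h : x * u = u * x * z) (c μ : K) :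
    ∀ v ∈ eigenspace (τ x) c ⊓ eigenspace (τ z) μ, τ u v ∈ eigenspace (τ x) (μ * c) := by
  rintro v ⟨hx, hz⟩
  rw [SetLike.mem_coe, mem_eigenspace_iff] at hx hz
  rw [mem_eigenspace_iff, ← Module.End.mul_apply, ← map_mul, h, map_mul, map_mul,
    Module.End.mul_apply, Module.End.mul_apply, hz, map_smul, map_smul, hx, map_smul, smul_smul]

lemma ne_zero_of_eigenspace_ne_bot {g : G} {μ : K} (h : eigenspace (τ g) μ ≠ ⊥) : μ ≠ 0 := by
  rintro rfl
  rw [eigenspace_zero, Ne, LinearMap.ker_eq_bot] at h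
  exact h (τ.apply_bijective g).1

lemma map_mem_eigenspace_of_commute {g h : G} (hgh : Commute g h) {c : K} {v : V}
    (hv : v ∈ eigenspace (τ g) c) : τ h v ∈ eigenspace (τ g) c :=
  mapsTo_genEigenspace_of_comm (hgh.map τ) c 1 hv

variable [FiniteDimensional K V]

lemma finrank_le_of_mapsTo (g : G) {W₁ W₂ : Submodule K V} (h : ∀ v ∈ W₁, τ g v ∈ W₂) :
    finrank K W₁ ≤ finrank K W₂ :=
  LinearMap.finrank_le_finrank_of_injective (f := (τ g).restrict h) fun _ _ hvw ↦
    Subtype.ext ((τ.apply_bijective g).1 (congrArg Subtype.val hvw))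

lemma three_mul_finrank_inf_eigenspace_le {x u z : G} (h : x * u = u * x * z) {μ : K}
    (hμ0 : μ ≠ 0) (hμ : μ ^ 2 ≠ 1) {W : Submodule K V} (hWz : W ≤ eigenspace (τ z) μ)
    (hWu : ∀ v ∈ W, τ u v ∈ W) {c : K} (hc : c ≠ 0) :
    3 * finrank K (W ⊓ eigenspace (τ x) c : Submodule K V) ≤ finrank K W := by
  let d : Fin 3 → K := ![c, μ * c, μ * (μ * c)]
  let F : Fin 3 → Submodule K V := fun m ↦ W ⊓ eigenspace (τ x) (d m)
  have hd : Function.Injective d := by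
    have hμ1 : μ ≠ 1 := by rintro rfl; simp at hμ
    have hμμ : μ * μ ≠ 1 := by rwa [← sq]
    intro a b hab
    fin_cases a <;> fin_cases b <;> simp_all [d, eq_comm, ← mul_assoc]
  have hindep : iSupIndep F :=
    ((eigenspaces_iSupIndep (τ x)).comp hd).mono fun m ↦ inf_le_right
  have hstep : ∀ d, ∀ v ∈ W ⊓ eigenspace (τ x) d, τ u v ∈ W ⊓ eigenspace (τ x) (μ * d) :=
    fun d v hv ↦ ⟨hWu v hv.1, mapsTo_eigenspace_mul τ h d μ v ⟨hv.2, hWz hv.1⟩⟩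
  have h01 : finrank K (F 0) ≤ finrank K (F 1) := finrank_le_of_mapsTo τ u (hstep c)
  have h12 : finrank K (F 1) ≤ finrank K (F 2) := finrank_le_of_mapsTo τ u (hstep (μ * c))
  calc 3 * finrank K (F 0)
    _ ≤ ∑ m, finrank K (F m) := by rw [Fin.sum_univ_three]; omega
    _ = finrank K (⨆ m, F m : Submodule K V) := (finrank_iSup_of_iSupIndep hindep).symm
    _ ≤ finrank K W := Submodule.finrank_mono (iSup_le fun m ↦ inf_le_left)

theorem three_pow_le_finrank_of_heisenberg [IsAlgClosed K] {ι : Type*} {x u : ι → G} {z : G}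
    (hxx : ∀ a b, Commute (x a) (x b)) (hxu : ∀ a b, a ≠ b → Commute (x a) (u b))
    (hz : ∀ a, x a * u a = u a * x a * z) {μ : K} (hμ0 : μ ≠ 0) (hμ : μ ^ 2 ≠ 1) (S : Finset ι)
    {W : Submodule K V} (hW : W ≠ ⊥) (hWz : W ≤ eigenspace (τ z) μ)
    (hWx : ∀ a ∈ S, ∀ v ∈ W, τ (x a) v ∈ W) (hWu : ∀ a ∈ S, ∀ v ∈ W, τ (u a) v ∈ W) :
    3 ^ S.card ≤ finrank K W := by
  classical
  induction S using Finset.induction_on generalizing W with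
  | empty => simpa [Submodule.one_le_finrank_iff] using hW
  | insert a S ha ih =>
    simp only [Finset.forall_mem_insert] at hWx hWu
    have := Submodule.nontrivial_iff_ne_bot.2 hW
    obtain ⟨c, hc⟩ := exists_eigenvalue ((τ (x a)).restrict hWx.1)
    obtain ⟨w, hw⟩ := hc.exists_hasEigenvector
    have hwc : (w : V) ∈ W ⊓ eigenspace (τ (x a)) c :=
      ⟨w.2, mem_eigenspace_iff.2 (congrArg Subtype.val hw.apply_eq_smul)⟩
    have hw0 : (w : V) ≠ 0 := fun h ↦ hw.2 (Subtype.ext h)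
    have hc0 : c ≠ 0 := ne_zero_of_eigenspace_ne_bot τ ((Submodule.ne_bot_iff _).2 ⟨w, hwc.2, hw0⟩)
    have hIH : 3 ^ S.card ≤ finrank K (W ⊓ eigenspace (τ (x a)) c : Submodule K V) := by
      refine ih ((Submodule.ne_bot_iff _).2 ⟨w, hwc, hw0⟩) (inf_le_left.trans hWz) ?_ ?_
      · exact fun b hb v hv ↦ ⟨hWx.2 b hb v hv.1, map_mem_eigenspace_of_commute τ (hxx a b) hv.2⟩
      · refine fun b hb v hv ↦ ⟨hWu.2 b hb v hv.1, map_mem_eigenspace_of_commute τ ?_ hv.2⟩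
        exact hxu a b (by rintro rfl; exact ha hb)
    rw [Finset.card_insert_of_notMem ha, pow_succ']
    exact (Nat.mul_le_mul_left 3 hIH).trans
      (three_mul_finrank_inf_eigenspace_le τ (hz a) hμ0 hμ hWz hWu.1 hc0)

end Eigenvalues

section TransvectionEigenvalues

variable {n : ℕ}

lemma weyl_sq_mul_transvection {i j k : Fin n} (hij : i ≠ j) (hik : i ≠ k) (hjk : j ≠ k) (t : ℤ) :
    weyl hjk ^ 2 * 𝐞 hij t = (𝐞 hij t)⁻¹ * weyl hjk ^ 2 := by
  refine Matrix.SpecialLinearGroup.ext _ _ fun a b ↦ ?_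
  have hsq : ∀ a b, (weyl hjk ^ 2 : SL(n, ℤ)) a b =
      if a = j ∨ a = k then -(1 : Matrix _ _ ℤ) a b else (1 : Matrix _ _ ℤ) a b := fun a b ↦ by
    simpa only [mul_one, coe_one] using weyl_sq_mul_apply hjk (1 : SL(n, ℤ)) a b
  rw [weyl_sq_mul_apply, transvection_inv, transvection_mul_apply, hsq, hsq, transvection_coe,
    Matrix.add_apply, Matrix.single_apply]
  by_cases ha : a = i
  · subst ha
    by_cases hb : j = b
    · subst hb
      simp [hij, hik]
    · simp [hij, hik, hb, one_apply]
  · by_cases hjk' : a = j ∨ a = k <;> simp [ha, hjk', Ne.symm ha]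

open Module Module.End

variable {K V : Type*} [Field K] [AddCommGroup V] [Module K V]

lemma eigenspace_inv_transvection_ne_bot (hn : 3 ≤ n) (τ : Representation K SL(n, ℤ) V)
    {i j : Fin n} (hij : i ≠ j) {μ : K} (h : eigenspace (τ (𝐞 hij 1)) μ ≠ ⊥) :
    eigenspace (τ (𝐞 hij 1)) μ⁻¹ ≠ ⊥ := by
  obtain ⟨v, hv, hv0⟩ := (Submodule.ne_bot_iff _).1 h
  have hμ := ne_zero_of_eigenspace_ne_bot τ h
  obtain ⟨k, hki, hkj⟩ := Fin.exists_ne_and_ne_of_two_lt i j hn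
  rw [mem_eigenspace_iff] at hv
  refine (Submodule.ne_bot_iff _).2 ⟨τ (weyl hkj.symm ^ 2) v, mem_eigenspace_iff.2 ?_, ?_⟩
  · have hconj : 𝐞 hij (1 : ℤ) * weyl hkj.symm ^ 2 * 𝐞 hij 1 = weyl hkj.symm ^ 2 := by
      rw [mul_assoc, weyl_sq_mul_transvection hij hki.symm hkj.symm, mul_inv_cancel_left]
    rw [eq_inv_smul_iff₀ hμ, ← map_smul, ← map_smul, ← hv]
    simp only [← Module.End.mul_apply, ← map_mul, ← mul_assoc, hconj]
  · exact fun h ↦ hv0 ((τ.apply_bijective _).1 (h.trans (map_zero _).symm))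

variable [FiniteDimensional K V] [IsAlgClosed K]

lemma three_pow_le_finrank_eigenspace_transvection (τ : Representation K SL(n, ℤ) V)
    {i j : Fin n} (hij : i ≠ j) {μ : K} (hμ : μ ^ 2 ≠ 1) (h : eigenspace (τ (𝐞 hij 1)) μ ≠ ⊥) :
    3 ^ (n - 2) ≤ finrank K (eigenspace (τ (𝐞 hij 1)) μ) := by
  have hcard : Fintype.card {k : Fin n // k ≠ i ∧ k ≠ j} = n - 2 := by
    have hcompl : ({k | k ≠ i ∧ k ≠ j} : Finset (Fin n)) = {i, j}ᶜ := by
      ext k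
      simp
    rw [Fintype.card_subtype, hcompl, Finset.card_compl, Finset.card_pair hij, Fintype.card_fin]
  rw [← hcard, ← Finset.card_univ]
  refine three_pow_le_finrank_of_heisenberg τ (z := 𝐞 hij (1 : ℤ))
    (x := fun k : {k : Fin n // k ≠ i ∧ k ≠ j} ↦ 𝐞 k.2.1.symm 1) (u := fun k ↦ 𝐞 k.2.2 1)
    (fun k l ↦ ?_) (fun k l hkl ↦ ?_) (fun k ↦ ?_) (ne_zero_of_eigenspace_ne_bot τ h) hμ _ h le_rfl
    (fun k _ v hv ↦ map_mem_eigenspace_of_commute τ ?_ hv)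
    (fun k _ v hv ↦ map_mem_eigenspace_of_commute τ ?_ hv)
  · exact transvection_mul_comm _ _ k.2.1 l.2.1.symm _ _
  · exact transvection_mul_comm _ _ (Subtype.coe_ne_coe.2 hkl) hij _ _
  · have hcomm₁ : Commute (𝐞 hij (1 : ℤ)) (𝐞 k.2.2 1) :=
      transvection_mul_comm _ _ k.2.2.symm hij _ _
    have hcomm₂ : Commute (𝐞 hij (1 : ℤ)) (𝐞 k.2.1.symm 1) :=
      transvection_mul_comm _ _ hij.symm k.2.1.symm _ _
    rw [transvection_mul_transvection k.2.1.symm k.2.2 hij, mul_one, mul_assoc,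
      (hcomm₁.mul_right hcomm₂).eq]
  · exact transvection_mul_comm _ _ hij.symm k.2.1.symm _ _
  · exact transvection_mul_comm _ _ k.2.2.symm hij _ _

theorem sq_eq_one_of_hasEigenvalue_transvection (hn : 3 ≤ n)
    (τ : Representation K SL(n, ℤ) V) (hdim : finrank K V < 2 * 3 ^ (n - 2)) {i j : Fin n}
    (hij : i ≠ j) {μ : K} (h : HasEigenvalue (τ (𝐞 hij 1)) μ) : μ ^ 2 = 1 := by
  by_contra hμ
  have hne : μ ≠ μ⁻¹ := fun h' ↦ hμ <| by
    rw [sq]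
    nth_rw 2 [h']
    exact mul_inv_cancel₀ (ne_zero_of_eigenspace_ne_bot τ h)
  have hsum := Submodule.finrank_add_finrank_le_of_disjoint
    (disjoint_genEigenspace (τ (𝐞 hij 1)) hne 1 1)
  have h₁ := three_pow_le_finrank_eigenspace_transvection τ hij hμ h
  have h₂ := three_pow_le_finrank_eigenspace_transvection τ hij (by rwa [inv_pow, Ne, inv_eq_one])
    (eigenspace_inv_transvection_ne_bot hn τ hij h)
  exact absurd ((Nat.add_le_add h₁ h₂).trans hsum) (by omega)

theorem isNilpotent_transvection_two_sub_one (hn : 3 ≤ n)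
    (τ : Representation K SL(n, ℤ) V) (hdim : finrank K V < 2 * 3 ^ (n - 2)) {i j : Fin n}
    (hij : i ≠ j) : IsNilpotent (τ (𝐞 hij 2) - 1) := by
  have hsq : τ (𝐞 hij 2) = τ (𝐞 hij 1) ^ 2 := by
    rw [← map_pow, sq, ← transvection_add, one_add_one_eq_two]
  have haeval : τ (𝐞 hij 2) - 1 =
      Polynomial.aeval (τ (𝐞 hij 1)) (Polynomial.X ^ 2 - 1 : Polynomial K) := by
    simp [hsq]
  rw [haeval]
  refine isNilpotent_aeval_of_forall_isRoot fun μ hμ ↦ ?_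
  simp [sq_eq_one_of_hasEigenvalue_transvection hn τ hdim hij hμ]

end TransvectionEigenvalues

/-- A system of differentiable one-parameter groups `X hij : ℂ → A`, one for each pair `i ≠ j`,
satisfying the Steinberg relations of the transvections `𝐞 hij t` in `SL(n, ℂ)`. -/
structure SteinbergSystem (n : ℕ) (A : Type*) [NormedRing A] [NormedAlgebra ℂ A] where
  X : ∀ {i j : Fin n}, i ≠ j → ℂ → A
  differentiable : ∀ {i j : Fin n} (hij : i ≠ j), Differentiable ℂ (X hij)
  map_zero : ∀ {i j : Fin n} (hij : i ≠ j), X hij 0 = 1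
  map_add : ∀ {i j : Fin n} (hij : i ≠ j) (s t : ℂ), X hij (s + t) = X hij s * X hij t
  mul_comm : ∀ {i j k l : Fin n} (hij : i ≠ j) (hkl : k ≠ l), j ≠ k → i ≠ l →
    ∀ s t : ℂ, X hij s * X hkl t = X hkl t * X hij s
  mul_mul : ∀ {i j k : Fin n} (hij : i ≠ j) (hjk : j ≠ k) (hik : i ≠ k) (s t : ℂ),
    X hij s * X hjk t = X hik (s * t) * X hjk t * X hij s

namespace SteinbergSystem

attribute [local instance] LieRing.ofAssociativeRing

variable {n : ℕ} {A : Type*} [NormedRing A] [NormedAlgebra ℂ A] (S : SteinbergSystem n A)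
  {i j k l : Fin n}

lemma X_mul_X_neg (hij : i ≠ j) (t : ℂ) : S.X hij t * S.X hij (-t) = 1 := by
  rw [← S.map_add, add_neg_cancel, S.map_zero]

lemma X_neg_mul_X (hij : i ≠ j) (t : ℂ) : S.X hij (-t) * S.X hij t = 1 := by
  rw [← S.map_add, neg_add_cancel, S.map_zero]

/-- The infinitesimal generator of the one-parameter group `S.X hij`. -/
noncomputable def gen (hij : i ≠ j) : A := deriv (S.X hij) 0

lemma hasDerivAt_zero (hij : i ≠ j) : HasDerivAt (S.X hij) (S.gen hij) 0 :=
  (S.differentiable hij 0).hasDerivAt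

lemma hasDerivAt (hij : i ≠ j) (t : ℂ) : HasDerivAt (S.X hij) (S.gen hij * S.X hij t) t := by
  have hshift : S.X hij = fun s ↦ S.X hij (s - t) * S.X hij t := by
    funext s
    rw [← S.map_add, sub_add_cancel]
  have hzero : HasDerivAt (S.X hij) (S.gen hij) (t - t) := by
    simpa only [sub_self] using S.hasDerivAt_zero hij
  rw [hshift]
  simpa only [sub_self, S.map_zero, one_mul] using (hzero.comp_sub_const t t).mul_const (S.X hij t)

lemma gen_mul_X_self (hij : i ≠ j) (t : ℂ) : S.gen hij * S.X hij t = S.X hij t * S.gen hij := by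
  have hleft := (S.hasDerivAt_zero hij).mul_const (S.X hij t)
  simp only [← S.map_add, add_comm _ t] at hleft
  simp only [S.map_add] at hleft
  exact hleft.unique ((S.hasDerivAt_zero hij).const_mul (S.X hij t))

lemma gen_mul_X (hij : i ≠ j) (hkl : k ≠ l) (hjk : j ≠ k) (hil : i ≠ l) (t : ℂ) :
    S.gen hij * S.X hkl t = S.X hkl t * S.gen hij := by
  have hleft := (S.hasDerivAt_zero hij).mul_const (S.X hkl t)
  simp only [S.mul_comm hij hkl hjk hil] at hleft
  exact hleft.unique ((S.hasDerivAt_zero hij).const_mul (S.X hkl t))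

lemma gen_mul_X_of_chain (hij : i ≠ j) (hjk : j ≠ k) (hik : i ≠ k) (t : ℂ) :
    S.gen hij * S.X hjk t = t • S.gen hik * S.X hjk t + S.X hjk t * S.gen hij := by
  have hleft := (S.hasDerivAt_zero hij).mul_const (S.X hjk t)
  simp only [S.mul_mul hij hjk hik] at hleft
  have hik' : HasDerivAt (fun s : ℂ ↦ S.X hik (s * t)) (t • S.gen hik) 0 := by
    have hzero : HasDerivAt (S.X hik) (S.gen hik) (0 * t) := by
      simpa only [zero_mul] using S.hasDerivAt_zero hik
    simpa [Function.comp_def] using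
      HasDerivAt.scomp (0 : ℂ) hzero ((hasDerivAt_id (0 : ℂ)).mul_const t)
  have hright := (hik'.mul_const (S.X hjk t)).mul (S.hasDerivAt_zero hij)
  simpa [S.map_zero] using hleft.unique hright

lemma lie_gen_gen_of_ne (hij : i ≠ j) (hkl : k ≠ l) (hjk : j ≠ k) (hil : i ≠ l) :
    ⁅S.gen hij, S.gen hkl⁆ = 0 := by
  have hleft := (S.hasDerivAt_zero hkl).const_mul (S.gen hij)
  simp only [S.gen_mul_X hij hkl hjk hil] at hleft
  rw [Ring.lie_def, hleft.unique ((S.hasDerivAt_zero hkl).mul_const (S.gen hij)), sub_self]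

lemma lie_gen_gen (hij : i ≠ j) (hjk : j ≠ k) (hik : i ≠ k) :
    ⁅S.gen hij, S.gen hjk⁆ = S.gen hik := by
  have hleft := (S.hasDerivAt_zero hjk).const_mul (S.gen hij)
  simp only [S.gen_mul_X_of_chain hij hjk hik] at hleft
  have hright := (((hasDerivAt_id (0 : ℂ)).smul_const (S.gen hik)).mul
    (S.hasDerivAt_zero hjk)).add ((S.hasDerivAt_zero hjk).mul_const (S.gen hij))
  rw [Ring.lie_def, hleft.unique hright]
  simp [S.map_zero]

/-- The image `[X_ij, X_ji]` of the coroot `E_ii - E_jj`; it is zero for `i = j`. -/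
noncomputable def coroot (i j : Fin n) : A :=
  if hij : i = j then 0 else ⁅S.gen hij, S.gen (Ne.symm hij)⁆

lemma coroot_self (i : Fin n) : S.coroot i i = 0 := dif_pos rfl

lemma coroot_of_ne (hij : i ≠ j) : S.coroot i j = ⁅S.gen hij, S.gen hij.symm⁆ := dif_neg hij

lemma coroot_swap (i j : Fin n) : S.coroot i j = -S.coroot j i := by
  rcases eq_or_ne i j with rfl | hij
  · rw [coroot_self, neg_zero]
  · rw [S.coroot_of_ne hij, S.coroot_of_ne hij.symm, lie_skew]

lemma coroot_add_coroot (i j k : Fin n) : S.coroot i j + S.coroot j k = S.coroot i k := by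
  rcases eq_or_ne i j with rfl | hij
  · rw [coroot_self, zero_add]
  rcases eq_or_ne j k with rfl | hjk
  · rw [coroot_self, add_zero]
  rcases eq_or_ne i k with rfl | hik
  · rw [S.coroot_swap i j, coroot_self, neg_add_cancel]
  have hjacobi := lie_lie (S.gen hij) (S.gen hjk) (S.gen hik.symm)
  rw [S.lie_gen_gen hij hjk hik, S.lie_gen_gen hjk hik.symm hij.symm,
    ← lie_skew (S.gen hij) (S.gen hik.symm), S.lie_gen_gen hik.symm hij hjk.symm, lie_neg,
    sub_neg_eq_add] at hjacobi
  rw [S.coroot_of_ne hij, S.coroot_of_ne hjk, S.coroot_of_ne hik, hjacobi]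

local notation "δ" => (1 : Matrix (Fin n) (Fin n) ℂ)

lemma lie_gen_coroot_left (hij : i ≠ j) (hik : i ≠ k) (hjk : j ≠ k) :
    ⁅S.gen hij, S.coroot i k⁆ = -S.gen hij := by
  rw [S.coroot_of_ne hik, leibniz_lie, S.lie_gen_gen_of_ne hij hik hij.symm hik, zero_lie,
    zero_add, ← lie_skew (S.gen hij) (S.gen hik.symm), S.lie_gen_gen hik.symm hij hjk.symm,
    lie_neg, S.lie_gen_gen hik hjk.symm hij]

lemma lie_gen_coroot_right (hij : i ≠ j) (hik : i ≠ k) (hjk : j ≠ k) :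
    ⁅S.gen hij, S.coroot k j⁆ = -S.gen hij := by
  rw [S.coroot_of_ne hjk.symm, leibniz_lie, S.lie_gen_gen_of_ne hij hjk.symm hjk hij, zero_lie,
    zero_add, S.lie_gen_gen hij hjk hik, ← lie_skew, S.lie_gen_gen hik hjk.symm hij]

lemma lie_gen_coroot (hn : 3 ≤ n) (hij : i ≠ j) (k l : Fin n) :
    ⁅S.gen hij, S.coroot k l⁆ = (δ j k - δ i k - (δ j l - δ i l)) • S.gen hij := by
  have hbase : ∀ m, ⁅S.gen hij, S.coroot i m⁆ = (-1 - (δ j m - δ i m)) • S.gen hij := by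
    intro m
    rcases eq_or_ne i m with rfl | him
    · simp [coroot_self, hij.symm]
    rcases eq_or_ne j m with rfl | hjm
    · obtain ⟨k, hki, hkj⟩ := Fin.exists_ne_and_ne_of_two_lt i j hn
      rw [← S.coroot_add_coroot i k j, lie_add, S.lie_gen_coroot_left hij hki.symm hkj.symm,
        S.lie_gen_coroot_right hij hki.symm hkj.symm, one_apply_eq, one_apply_ne hij]
      module
    · simp [S.lie_gen_coroot_left hij him hjm, hjm, him]
  rw [← S.coroot_add_coroot k i l, S.coroot_swap k i, lie_add, lie_neg, hbase, hbase]
  module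

/-- The image of the matrix unit `E_ij` under the Lie algebra map `lieMap`; on the diagonal, the
image of the traceless matrix `E_ii - n⁻¹ • 1`. -/
noncomputable def lieUnit (i j : Fin n) : A :=
  if hij : i = j then (n : ℂ)⁻¹ • ∑ k, S.coroot i k else S.gen hij

lemma lieUnit_of_ne (hij : i ≠ j) : S.lieUnit i j = S.gen hij := dif_neg hij

lemma lieUnit_self (i : Fin n) : S.lieUnit i i = (n : ℂ)⁻¹ • ∑ k, S.coroot i k := dif_pos rfl

lemma lieUnit_sub_lieUnit (i j : Fin n) : S.lieUnit i i - S.lieUnit j j = S.coroot i j := by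
  have hn : (n : ℂ) ≠ 0 := Nat.cast_ne_zero.2 i.pos.ne'
  have hterm : ∀ k, S.coroot i k - S.coroot j k = S.coroot i j := fun k ↦ by
    rw [← S.coroot_add_coroot i j k, add_sub_cancel_right]
  simp only [lieUnit_self, ← smul_sub, ← Finset.sum_sub_distrib, hterm, Finset.sum_const,
    Finset.card_univ, Fintype.card_fin]
  rw [← Nat.cast_smul_eq_nsmul ℂ, inv_smul_smul₀ hn]

lemma lie_gen_lieUnit_self (hn : 3 ≤ n) (hij : i ≠ j) (k : Fin n) :
    ⁅S.gen hij, S.lieUnit k k⁆ = (δ j k - δ i k) • S.gen hij := by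
  have hn0 : (n : ℂ) ≠ 0 := Nat.cast_ne_zero.2 i.pos.ne'
  have hsum : ∀ i : Fin n, ∑ m, δ i m = 1 := fun i ↦ by simp [one_apply]
  simp only [lieUnit_self, lie_smul, lie_sum, S.lie_gen_coroot hn hij, ← Finset.sum_smul]
  rw [Finset.sum_sub_distrib, Finset.sum_sub_distrib (fun m ↦ δ j m), hsum, hsum, sub_self,
    sub_zero, Finset.sum_const, Finset.card_univ, Fintype.card_fin, ← Nat.cast_smul_eq_nsmul ℂ,
    smul_assoc, inv_smul_smul₀ hn0]

lemma lie_gen_lieUnit (hn : 3 ≤ n) (hij : i ≠ j) (k l : Fin n) :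
    ⁅S.gen hij, S.lieUnit k l⁆ = δ j k • S.lieUnit i l - δ l i • S.lieUnit k j := by
  rcases eq_or_ne k l with rfl | hkl
  · rw [S.lie_gen_lieUnit_self hn hij, sub_smul, ← S.lieUnit_of_ne hij]
    congr 1
    · rcases eq_or_ne j k with rfl | hjk
      · rfl
      · simp [hjk]
    · rcases eq_or_ne i k with rfl | hik
      · rfl
      · simp [hik, hik.symm]
  rw [S.lieUnit_of_ne hkl]
  rcases eq_or_ne j k with rfl | hjk <;> rcases eq_or_ne i l with rfl | hil
  · rw [one_apply_eq, one_apply_eq, one_smul, one_smul, S.lieUnit_sub_lieUnit, S.coroot_of_ne]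
  · simp [S.lie_gen_gen hij hkl hil, S.lieUnit_of_ne hil, hil.symm]
  · rw [← lie_skew, S.lie_gen_gen hkl hij hjk.symm, S.lieUnit_of_ne hjk.symm]
    simp [hjk]
  · simp [S.lie_gen_gen_of_ne hij hkl hjk hil, hjk, hil.symm]

/-- The Lie algebra map `𝔤𝔩_n → 𝔰𝔩_n → A` sending `E_ij` to the infinitesimal generator of `X hij`,
the first arrow being the projection along the scalar matrices. -/
noncomputable def lieMap : Matrix (Fin n) (Fin n) ℂ →ₗ[ℂ] A where
  toFun Y := ∑ k, ∑ l, Y k l • S.lieUnit k l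
  map_add' Y Z := by simp [add_smul, Finset.sum_add_distrib]
  map_smul' c Y := by simp [Finset.smul_sum, smul_smul]

lemma lieMap_single (i j : Fin n) (c : ℂ) : S.lieMap (single i j c) = c • S.lieUnit i j := by
  change ∑ k, ∑ l, single i j c k l • S.lieUnit k l = _
  simp [single_apply, ite_and]

lemma lie_gen_lieMap (hn : 3 ≤ n) (hij : i ≠ j) (Y : Matrix (Fin n) (Fin n) ℂ) :
    ⁅S.gen hij, S.lieMap Y⁆ = S.lieMap (single i j 1 * Y - Y * single i j 1) := by
  induction Y using Matrix.induction_on' with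
  | h_zero => simp
  | h_add Y Z hY hZ =>
    rw [_root_.map_add, lie_add, hY, hZ, ← _root_.map_add]
    congr 1
    simp only [mul_add, add_mul]
    abel
  | h_std_basis k l x =>
    have hleft : S.lieMap (single i j 1 * single k l x) = x • δ j k • S.lieUnit i l := by
      rcases eq_or_ne j k with rfl | hjk
      · simp [lieMap_single]
      · simp [single_mul_single_of_ne _ _ _ _ hjk, hjk]
    have hright : S.lieMap (single k l x * single i j 1) = x • δ l i • S.lieUnit k j := by
      rcases eq_or_ne l i with rfl | hli
      · simp [lieMap_single]
      · simp [single_mul_single_of_ne _ _ _ _ hli, hli]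
    rw [lieMap_single, lie_smul, S.lie_gen_lieUnit hn hij, map_sub, hleft, hright, smul_sub]

lemma transvection_mul_mul_transvection_neg (hij : i ≠ j) (Y : Matrix (Fin n) (Fin n) ℂ) (t : ℂ) :
    (𝐞 hij t).1 * Y * (𝐞 hij (-t)).1 = Y + t • (single i j 1 * Y - Y * single i j 1) -
      t ^ 2 • (single i j 1 * Y * single i j 1) := by
  have hsingle : ∀ s : ℂ, (𝐞 hij s).1 = 1 + s • single i j 1 := fun s ↦ by
    simp [transvection_coe, smul_single]
  rw [hsingle, hsingle]
  simp only [add_mul, mul_add, one_mul, mul_one, smul_mul_assoc, mul_smul_comm]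
  module

lemma hasDerivAt_lieMap_conj (hn : 3 ≤ n) (hij : i ≠ j) (Y : Matrix (Fin n) (Fin n) ℂ) (t : ℂ) :
    HasDerivAt (fun s ↦ S.lieMap ((𝐞 hij s).1 * Y * (𝐞 hij (-s)).1))
      ⁅S.gen hij, S.lieMap ((𝐞 hij t).1 * Y * (𝐞 hij (-t)).1)⁆ t := by
  have hsq : (single i j 1 * single i j 1 : Matrix (Fin n) (Fin n) ℂ) = 0 :=
    single_mul_single_of_ne _ _ _ _ hij.symm _
  have hlie : single i j 1 * ((𝐞 hij t).1 * Y * (𝐞 hij (-t)).1) -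
      (𝐞 hij t).1 * Y * (𝐞 hij (-t)).1 * single i j 1 =
        single i j 1 * Y - Y * single i j 1 - (2 * t) • (single i j 1 * Y * single i j 1) := by
    simp only [transvection_mul_mul_transvection_neg, mul_add, add_mul, mul_sub, sub_mul,
      mul_smul_comm, smul_mul_assoc, ← mul_assoc, hsq, zero_mul]
    simp only [mul_assoc, hsq, mul_zero]
    module
  rw [S.lie_gen_lieMap hn hij, hlie]
  simp only [transvection_mul_mul_transvection_neg, _root_.map_add, map_sub, map_smul]
  refine ((((hasDerivAt_id' t).smul_const _).const_add _).sub
    ((hasDerivAt_pow 2 t).smul_const _)).congr_deriv ?_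
  simp

theorem X_mul_lieMap (hn : 3 ≤ n) (hij : i ≠ j) (Y : Matrix (Fin n) (Fin n) ℂ) (t : ℂ) :
    S.X hij t * S.lieMap Y = S.lieMap ((𝐞 hij t).1 * Y * (𝐞 hij (-t)).1) * S.X hij t := by
  set Z : ℂ → A := fun s ↦ S.lieMap ((𝐞 hij s).1 * Y * (𝐞 hij (-s)).1)
  have hZ : ∀ s, HasDerivAt Z ⁅S.gen hij, Z s⁆ s := S.hasDerivAt_lieMap_conj hn hij Y
  have hneg : ∀ s, HasDerivAt (fun s ↦ S.X hij (-s)) (-(S.X hij (-s) * S.gen hij)) s := fun s ↦ by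
    rw [← S.gen_mul_X_self]
    exact (HasDerivAt.scomp s (S.hasDerivAt hij (-s)) (hasDerivAt_neg s)).congr_deriv
      (neg_one_smul ..)
  have hderiv : ∀ s, HasDerivAt (fun s ↦ S.X hij (-s) * Z s * S.X hij s) 0 s := fun s ↦ by
    refine (((hneg s).mul (hZ s)).mul (S.hasDerivAt hij s)).congr_deriv ?_
    simp only [Pi.mul_apply, Ring.lie_def]
    noncomm_ring
  have hconst : S.X hij (-t) * Z t * S.X hij t = S.lieMap Y := by
    have := is_const_of_deriv_eq_zero (fun s ↦ (hderiv s).differentiableAt)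
      (fun s ↦ (hderiv s).deriv) t 0
    simpa [Z, S.map_zero] using this
  rw [← hconst, ← mul_assoc, ← mul_assoc, S.X_mul_X_neg, one_mul]

end SteinbergSystem

section FunctionRings

variable {K T : Type*} [Field K] (O : Subalgebra K (T → K)) (𝔭 : Ideal O) [𝔭.IsPrime]

/-- The functions on `T` that become elements of `O` after multiplication by some denominator
`q ∈ O` outside the prime `𝔭`; modulo `vanishingNear O 𝔭` this is the localization of `O` at
`𝔭`. -/
def fractionsAt : Subalgebra K (T → K) where
  carrier := {f | ∃ q : O, q ∉ 𝔭 ∧ ↑q * f ∈ O}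
  mul_mem' := by
    rintro f g ⟨q, hq, hf⟩ ⟨r, hr, hg⟩
    refine ⟨q * r, Ideal.IsPrime.mul_notMem ‹_› hq hr, ?_⟩
    rw [Subalgebra.coe_mul, mul_mul_mul_comm]
    exact mul_mem hf hg
  add_mem' := by
    rintro f g ⟨q, hq, hf⟩ ⟨r, hr, hg⟩
    refine ⟨q * r, Ideal.IsPrime.mul_notMem ‹_› hq hr, ?_⟩
    have hsplit : ↑(q * r) * (f + g) = ↑r * (↑q * f) + ↑q * (↑r * g) := by
      rw [Subalgebra.coe_mul]
      ring
    rw [hsplit]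
    exact add_mem (mul_mem r.2 hf) (mul_mem q.2 hg)
  algebraMap_mem' c := ⟨1, Ideal.IsPrime.one_notMem ‹_›, mul_mem (one_mem O) (O.algebraMap_mem c)⟩

lemma le_fractionsAt : O ≤ fractionsAt O 𝔭 := fun f hf ↦
  ⟨1, Ideal.IsPrime.one_notMem ‹_›, mul_mem (one_mem O) hf⟩

/-- The ideal of functions killed by some element of `O` outside the prime `𝔭`. -/
def vanishingNear : Ideal (fractionsAt O 𝔭) where
  carrier := {f | ∃ q : O, q ∉ 𝔭 ∧ (q : T → K) * f = 0}
  zero_mem' := ⟨1, Ideal.IsPrime.one_notMem ‹_›, by simp⟩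
  add_mem' := by
    rintro f g ⟨q, hq, hf⟩ ⟨r, hr, hg⟩
    refine ⟨q * r, Ideal.IsPrime.mul_notMem ‹_› hq hr, ?_⟩
    rw [Subalgebra.coe_mul, Subalgebra.coe_add, mul_add, mul_right_comm, hf, mul_assoc, hg,
      zero_mul, mul_zero, add_zero]
  smul_mem' := by
    rintro c f ⟨q, hq, hf⟩
    refine ⟨q, hq, ?_⟩
    rw [smul_eq_mul, Subalgebra.coe_mul, mul_left_comm, hf, mul_zero]

variable {O 𝔭}

variable (O 𝔭) in
/-- The localization of the function ring `O` at the prime `𝔭`, presented as a quotient of the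
subalgebra `fractionsAt O 𝔭` of functions. -/
def GermsAt : Type _ := fractionsAt O 𝔭 ⧸ vanishingNear O 𝔭

namespace GermsAt

instance : CommRing (GermsAt O 𝔭) := Ideal.Quotient.commRing _

variable (O 𝔭) in
/-- The germ at `𝔭` of a fraction. -/
def mk : fractionsAt O 𝔭 →+* GermsAt O 𝔭 := Ideal.Quotient.mk _

lemma mk_surjective : Function.Surjective (mk O 𝔭) := Ideal.Quotient.mk_surjective

lemma mk_eq_mk {f g : fractionsAt O 𝔭} :
    mk O 𝔭 f = mk O 𝔭 g ↔ ∃ q : O, q ∉ 𝔭 ∧ (q : T → K) * (f - g) = 0 := Ideal.Quotient.eq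

lemma isUnit_mk {f : fractionsAt O 𝔭} {q a : O} (hq : q ∉ 𝔭) (ha : a ∉ 𝔭)
    (hqf : (q : T → K) * f = a) : IsUnit (mk O 𝔭 f) := by
  have hinv : (a * a : O) * (q / a : T → K) = (a * q : O) := by
    funext x
    change a.1 x * a.1 x * (q.1 x / a.1 x) = a.1 x * q.1 x
    rcases eq_or_ne (a.1 x) 0 with hax | hax
    · rw [hax, zero_mul, zero_mul, zero_mul]
    · rw [mul_assoc, mul_div_cancel₀ _ hax]
  let g : fractionsAt O 𝔭 :=
    ⟨q / a, a * a, Ideal.IsPrime.mul_notMem ‹_› ha ha, hinv ▸ (a * q).2⟩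
  refine isUnit_iff_exists_inv.2 ⟨mk O 𝔭 g, ?_⟩
  rw [← map_mul, ← map_one (mk O 𝔭), mk_eq_mk]
  refine ⟨a * q, Ideal.IsPrime.mul_notMem ‹_› ha hq, ?_⟩
  funext x
  have hx : q.1 x * f.1 x = a.1 x := congrFun hqf x
  change a.1 x * q.1 x * (f.1 x * (q.1 x / a.1 x) - 1) = 0
  rcases eq_or_ne (a.1 x) 0 with hax | hax
  · rw [hax, zero_mul, zero_mul]
  · rw [mul_assoc, mul_sub, ← mul_assoc, hx, mul_div_cancel₀ _ hax, mul_one, sub_self, mul_zero]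

instance : IsLocalRing (GermsAt O 𝔭) := by
  have : Nontrivial (GermsAt O 𝔭) := by
    refine ⟨⟨1, 0, fun h ↦ ?_⟩⟩
    rw [← map_one (mk O 𝔭), ← map_zero (mk O 𝔭), mk_eq_mk] at h
    obtain ⟨q, hq, hq0⟩ := h
    have : q = 0 := Subtype.ext (by simpa using hq0)
    exact hq (this ▸ 𝔭.zero_mem)
  refine IsLocalRing.of_isUnit_or_isUnit_one_sub_self fun x ↦ ?_
  obtain ⟨f, rfl⟩ := mk_surjective x
  obtain ⟨q, hq, hqf⟩ := f.2
  by_cases ha : (⟨_, hqf⟩ : O) ∈ 𝔭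
  · right
    rw [← map_one (mk O 𝔭), ← map_sub]
    refine isUnit_mk (a := q - ⟨_, hqf⟩) hq (fun h ↦ hq ?_) ?_
    · simpa using 𝔭.add_mem h ha
    · simp [mul_sub]
  · exact .inl (isUnit_mk hq ha rfl)

end GermsAt

lemma mem_of_forall_mem_fractionsAt {f : T → K}
    (h : ∀ 𝔪 : Ideal O, [𝔪.IsMaximal] → f ∈ fractionsAt O 𝔪) : f ∈ O := by
  let denominators : Ideal O :=
    { carrier := {q | ↑q * f ∈ O}
      zero_mem' := by simp
      add_mem' := fun {q r} hq hr ↦ by simpa [add_mul] using add_mem hq hr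
      smul_mem' := fun c q hq ↦ by simpa [mul_assoc] using mul_mem c.2 hq }
  have htop : denominators = ⊤ := by
    by_contra hne
    obtain ⟨𝔪, h𝔪, hle⟩ := denominators.exists_le_maximal hne
    obtain ⟨q, hq, hqf⟩ := h 𝔪
    exact hq (hle hqf)
  have hone : (1 : O) ∈ denominators := htop ▸ Submodule.mem_top
  simpa [denominators] using hone

end FunctionRings

namespace SteinbergSystem

variable {n : ℕ} {A : Type*} [NormedRing A] [NormedAlgebra ℂ A] (S : SteinbergSystem n A)
  {T T' : Type*} {i j : Fin n}

/-- The pair formed by the transvection `𝐞 hij t` and the value `S.X hij t` prescribed for it. -/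
def lift (hij : i ≠ j) (t : ℂ) : SL(n, ℂ) × Aˣ :=
  (𝐞 hij t, ⟨S.X hij t, S.X hij (-t), S.X_mul_X_neg hij t, S.X_neg_mul_X hij t⟩)

lemma lift_neg (hij : i ≠ j) (t : ℂ) : S.lift hij (-t) = (S.lift hij t)⁻¹ :=
  Prod.ext (transvection_inv hij t).symm (Units.ext rfl)

lemma lift_zero (hij : i ≠ j) : S.lift hij 0 = 1 :=
  Prod.ext (transvection_coeff_zero hij) (Units.ext (S.map_zero hij))

/-- The subgroup generated by the pairs `S.lift hij t`: the graph of the homomorphism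
`SL(n, ℂ) →* Aˣ` extending the one-parameter groups `S.X hij`, once that is known to exist. -/
def graph : Subgroup (SL(n, ℂ) × Aˣ) :=
  Subgroup.closure {p | ∃ (i j : Fin n) (hij : i ≠ j) (t : ℂ), p = S.lift hij t}

/-- The families of elements of `S.graph` indexed by `T` that are products of generators
`S.lift hij (c x)` whose coefficients, as functions of `x : T`, belong to `C`. -/
def lifts (C : Set (T → ℂ)) : Subgroup (T → SL(n, ℂ) × Aˣ) :=
  Subgroup.closure {p | ∃ (i j : Fin n) (hij : i ≠ j), ∃ c ∈ C, p = fun x ↦ S.lift hij (c x)}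

variable {S}

lemma lift_mem_lifts {C : Set (T → ℂ)} (hij : i ≠ j) {c : T → ℂ} (hc : c ∈ C) :
    (fun x ↦ S.lift hij (c x)) ∈ S.lifts C :=
  Subgroup.subset_closure ⟨i, j, hij, c, hc, rfl⟩

lemma lifts_comp {C : Set (T → ℂ)} {C' : Set (T' → ℂ)} (φ : T' → T) (hC : ∀ c ∈ C, c ∘ φ ∈ C')
    {p : T → SL(n, ℂ) × Aˣ} (hp : p ∈ S.lifts C) : p ∘ φ ∈ S.lifts C' := by
  induction hp using Subgroup.closure_induction with
  | mem p hp =>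
    obtain ⟨i, j, hij, c, hc, rfl⟩ := hp
    exact lift_mem_lifts hij (hC c hc)
  | one => exact one_mem _
  | mul p q _ _ hp hq => exact mul_mem hp hq
  | inv p _ hp => exact inv_mem hp

lemma apply_mem_graph {C : Set (T → ℂ)} {p : T → SL(n, ℂ) × Aˣ} (hp : p ∈ S.lifts C) (x : T) :
    p x ∈ S.graph := by
  induction hp using Subgroup.closure_induction with
  | mem p hp =>
    obtain ⟨i, j, hij, c, -, rfl⟩ := hp
    exact Subgroup.subset_closure ⟨i, j, hij, c x, rfl⟩
  | one => exact one_mem _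
  | mul p q _ _ hp hq => exact mul_mem hp hq
  | inv p _ hp => exact inv_mem hp

lemma snd_mul_lieMap_of_mem_graph (hn : 3 ≤ n) {p : SL(n, ℂ) × Aˣ} (hp : p ∈ S.graph)
    (Y : Matrix (Fin n) (Fin n) ℂ) :
    (p.2 : A) * S.lieMap Y = S.lieMap (p.1.1 * Y * (p.1⁻¹).1) * p.2 := by
  induction hp using Subgroup.closure_induction'' generalizing Y with
  | mem p hp =>
    obtain ⟨i, j, hij, t, rfl⟩ := hp
    simpa only [lift, transvection_inv] using S.X_mul_lieMap hn hij Y t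
  | inv_mem p hp =>
    obtain ⟨i, j, hij, t, rfl⟩ := hp
    rw [← lift_neg]
    simpa only [lift, transvection_inv] using S.X_mul_lieMap hn hij Y (-t)
  | one => simp
  | mul p q _ _ hp hq =>
    simp only [Prod.fst_mul, Prod.snd_mul, Units.val_mul, _root_.mul_inv_rev, coe_mul]
    rw [mul_assoc, hq, ← mul_assoc, hp]
    simp only [mul_assoc]

/-- The family `p` is differentiable at `z` with left logarithmic derivative
`(Θ, S.lieMap Θ)`. -/
def HasLogDerivAt (S : SteinbergSystem n A) (p : ℂ → SL(n, ℂ) × Aˣ)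
    (Θ : Matrix (Fin n) (Fin n) ℂ) (z : ℂ) : Prop :=
  (∀ a b, HasDerivAt (fun x ↦ (p x).1 a b) ((Θ * (p z).1.1) a b) z) ∧
    HasDerivAt (fun x ↦ ((p x).2 : A)) (S.lieMap Θ * (p z).2) z

lemma hasLogDerivAt_lift (hij : i ≠ j) {c : ℂ → ℂ} {c' z : ℂ} (hc : HasDerivAt c c' z) :
    S.HasLogDerivAt (fun x ↦ S.lift hij (c x)) (single i j c') z := by
  constructor
  · intro a b
    have hmul : single i j c' * (𝐞 hij (c z)).1 = single i j c' := by
      rw [transvection_coe, mul_add, mul_one, single_mul_single_of_ne _ _ _ _ hij.symm, add_zero]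
    change HasDerivAt (fun x ↦ (𝐞 hij (c x)).1 a b) ((single i j c' * (𝐞 hij (c z)).1) a b) z
    rw [hmul]
    simp only [transvection_coe, Matrix.add_apply, single_apply]
    split_ifs
    · exact hc.const_add _
    · simpa using hasDerivAt_const z _
  · refine (HasDerivAt.scomp z (S.hasDerivAt hij (c z)) hc).congr_deriv ?_
    rw [lieMap_single, S.lieUnit_of_ne hij, smul_mul_assoc]
    rfl

lemma HasLogDerivAt.mul (hn : 3 ≤ n) {p q : ℂ → SL(n, ℂ) × Aˣ} {Θ Ψ : Matrix (Fin n) (Fin n) ℂ}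
    {z : ℂ} (hpz : p z ∈ S.graph) (hp : S.HasLogDerivAt p Θ z) (hq : S.HasLogDerivAt q Ψ z) :
    S.HasLogDerivAt (p * q) (Θ + (p z).1.1 * Ψ * ((p z).1⁻¹).1) z := by
  constructor
  · intro a b
    have hentries : ((Θ + (p z).1.1 * Ψ * ((p z).1⁻¹).1) * ((p * q) z).1.1) =
        Θ * (p z).1.1 * (q z).1.1 + (p z).1.1 * (Ψ * (q z).1.1) := by
      have hcancel : ((p z).1⁻¹).1 * ((p z).1.1 * (q z).1.1) = (q z).1.1 := by
        rw [← coe_mul, ← coe_mul, inv_mul_cancel_left]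
      simp only [Pi.mul_apply, Prod.fst_mul, coe_mul, add_mul, mul_assoc, hcancel]
    rw [hentries]
    have := HasDerivAt.fun_sum fun c (_ : c ∈ Finset.univ) ↦ (hp.1 a c).mul (hq.1 c b)
    simpa [mul_apply, Finset.sum_add_distrib] using this
  · refine (hp.2.mul hq.2).congr_deriv ?_
    rw [_root_.map_add, add_mul, ← mul_assoc _ (S.lieMap Ψ), snd_mul_lieMap_of_mem_graph hn hpz]
    simp only [Pi.mul_apply, Prod.snd_mul, Units.val_mul, mul_assoc]

lemma exists_hasLogDerivAt (hn : 3 ≤ n) {C : Set (ℂ → ℂ)} {z : ℂ}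
    (hC : ∀ c ∈ C, DifferentiableAt ℂ c z) {p : ℂ → SL(n, ℂ) × Aˣ} (hp : p ∈ S.lifts C) :
    ∃ Θ, S.HasLogDerivAt p Θ z := by
  induction hp using Subgroup.closure_induction'' with
  | mem p hp =>
    obtain ⟨i, j, hij, c, hc, rfl⟩ := hp
    exact ⟨_, hasLogDerivAt_lift hij (hC c hc).hasDerivAt⟩
  | inv_mem p hp =>
    obtain ⟨i, j, hij, c, hc, rfl⟩ := hp
    have hinv : (fun x ↦ S.lift hij (c x))⁻¹ = fun x ↦ S.lift hij (-c x) :=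
      funext fun x ↦ (S.lift_neg hij (c x)).symm
    exact ⟨_, hinv ▸ hasLogDerivAt_lift hij (hC c hc).hasDerivAt.neg⟩
  | one =>
    refine ⟨0, fun a b ↦ ?_, ?_⟩
    · simpa using hasDerivAt_const z _
    · simpa using hasDerivAt_const z _
  | mul p q hp _ hp' hq' =>
    obtain ⟨Θ, hΘ⟩ := hp'
    obtain ⟨Ψ, hΨ⟩ := hq'
    exact ⟨_, hΘ.mul hn (apply_mem_graph hp z) hΨ⟩

lemma snd_eq_snd_of_fst_eq_one (hn : 3 ≤ n) {U : Set ℂ} (hU : IsOpen U) (hU' : IsPreconnected U)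
    {p : ℂ → SL(n, ℂ) × Aˣ} (hp : p ∈ S.lifts {c | DifferentiableOn ℂ c U})
    (hp1 : ∀ z ∈ U, (p z).1 = 1) {z w : ℂ} (hz : z ∈ U) (hw : w ∈ U) : (p z).2 = (p w).2 := by
  have hderiv : ∀ z ∈ U, HasDerivAt (fun x ↦ ((p x).2 : A)) 0 z := by
    intro z hz
    obtain ⟨Θ, hfst, hsnd⟩ := exists_hasLogDerivAt hn
      (fun c hc ↦ hc.differentiableAt (hU.mem_nhds hz)) hp
    have hΘ : Θ = 0 := by
      ext a b
      have hconst : HasDerivAt (fun x ↦ (p x).1 a b) 0 z := by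
        refine (hasDerivAt_const z ((1 : SL(n, ℂ)) a b)).congr_of_eventuallyEq ?_
        filter_upwards [hU.mem_nhds hz] with x hx
        rw [hp1 x hx]
      simpa [hp1 z hz] using (hfst a b).unique hconst
    simpa [hΘ] using hsnd
  exact Units.ext <| hU.is_const_of_deriv_eq_zero hU'
    (fun z hz ↦ (hderiv z hz).differentiableAt.differentiableWithinAt)
    (fun z hz ↦ (hderiv z hz).deriv) hz hw

end SteinbergSystem

section EvalFamily

variable {K T : Type*} [Field K]

/-- Evaluation at `x : T` of the functions belonging to a subalgebra of `T → K`. -/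
def evalAt (O : Subalgebra K (T → K)) (x : T) : O →+* K :=
  (Pi.evalRingHom (fun _ ↦ K) x).comp (O.val : O →+* (T → K))

/-- A matrix over an algebra of functions on `T`, viewed as a family of matrices indexed
by `T`. -/
def evalFamily (n : ℕ) (O : Subalgebra K (T → K)) : SL(n, O) →* (T → SL(n, K)) :=
  MonoidHom.pi fun x ↦ Matrix.SpecialLinearGroup.map (evalAt O x)

lemma evalFamily_transvection {n : ℕ} {O : Subalgebra K (T → K)} {i j : Fin n} (hij : i ≠ j)
    (c : O) : evalFamily n O (𝐞 hij c) = fun x ↦ 𝐞 hij (c.1 x) :=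
  funext fun x ↦ map_transvection (evalAt O x) hij c

/-- The polynomial functions on `ℂ`. -/
noncomputable def polyFunctions : Subalgebra ℂ (ℂ → ℂ) := (Polynomial.aeval (id : ℂ → ℂ)).range

lemma mem_polyFunctions {f : ℂ → ℂ} :
    f ∈ polyFunctions ↔ ∃ P : Polynomial ℂ, ∀ z, P.eval z = f z := by
  simp [polyFunctions, funext_iff, Polynomial.aeval_fn_apply]

/-- The regular functions on `SL(n, ℂ)`: the polynomials in the matrix entries. -/
noncomputable def regularFunctions (n : ℕ) : Subalgebra ℂ (SL(n, ℂ) → ℂ) :=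
  (MvPolynomial.aeval fun (q : Fin n × Fin n) (g : SL(n, ℂ)) ↦ g q.1 q.2).range

lemma aeval_apply_eq_eval {σ : Type*} (F : σ → T → K) (P : MvPolynomial σ K) (x : T) :
    MvPolynomial.aeval F P x = MvPolynomial.eval (fun q ↦ F q x) P :=
  MvPolynomial.comp_aeval_apply F (Pi.evalAlgHom K (fun _ ↦ K) x) P

lemma mem_regularFunctions {n : ℕ} {f : SL(n, ℂ) → ℂ} :
    f ∈ regularFunctions n ↔
      ∃ P : MvPolynomial (Fin n × Fin n) ℂ, ∀ g, MvPolynomial.eval (fun q ↦ g q.1 q.2) P = f g := by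
  simp [regularFunctions, funext_iff, aeval_apply_eq_eval]

/-- The identity of `SL(n, ℂ)` viewed as a matrix of regular functions. -/
noncomputable def genericMatrix (n : ℕ) : SL(n, regularFunctions n) :=
  ⟨.of fun a b ↦ ⟨fun g ↦ g a b, .X (a, b), MvPolynomial.aeval_X ..⟩, by
    refine Subtype.ext (funext fun g ↦ ?_)
    change evalAt _ g (det _) = 1
    rw [RingHom.map_det]
    exact g.2⟩

lemma evalFamily_genericMatrix (n : ℕ) : evalFamily n (regularFunctions n) (genericMatrix n) = id :=
  rfl

lemma differentiable_of_mem_polyFunctions {f : ℂ → ℂ} (hf : f ∈ polyFunctions) :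
    Differentiable ℂ f := by
  obtain ⟨P, hP⟩ := mem_polyFunctions.1 hf
  exact funext hP ▸ P.differentiable

lemma isPreconnected_ne_zero_of_mem_polyFunctions {f : ℂ → ℂ} (hf : f ∈ polyFunctions) :
    IsPreconnected {z | f z ≠ 0} := by
  obtain ⟨P, hP⟩ := mem_polyFunctions.1 hf
  rcases eq_or_ne P 0 with rfl | hP0
  · simp [← hP, isPreconnected_empty]
  have hcompl : {z | f z ≠ 0} = {z | P.IsRoot z}ᶜ := by
    ext z
    simp [hP]
  rw [hcompl]
  refine ((Polynomial.finite_setOfPred_isRoot hP0).countable.isPathConnected_compl_of_one_lt_rank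
    ?_).isConnected.isPreconnected
  simp [Complex.rank_real_complex]

end EvalFamily

namespace SteinbergSystem

variable {n : ℕ} {A : Type*} [NormedRing A] [NormedAlgebra ℂ A] {S : SteinbergSystem n A}
  {T : Type*} {O : Subalgebra ℂ (T → ℂ)} {𝔭 : Ideal O} [𝔭.IsPrime]

lemma exists_evalFamily_eq_fst {p : T → SL(n, ℂ) × Aˣ} (hp : p ∈ S.lifts (O : Set (T → ℂ))) :
    ∃ M : SL(n, O), ∀ x, evalFamily n O M x = (p x).1 := by
  have hle : S.lifts (O : Set (T → ℂ)) ≤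
      (evalFamily n O).range.comap ((MonoidHom.fst SL(n, ℂ) Aˣ).compLeft T) := by
    refine (Subgroup.closure_le _).2 ?_
    rintro _ ⟨i, j, hij, c, hc, rfl⟩
    exact ⟨𝐞 hij ⟨c, hc⟩, evalFamily_transvection hij _⟩
  obtain ⟨M, hM⟩ := hle hp
  exact ⟨M, congrFun hM⟩

lemma exists_common_denominator {p : T → SL(n, ℂ) × Aˣ}
    (hp : p ∈ S.lifts (fractionsAt O 𝔭 : Set (T → ℂ))) :
    ∃ q : O, q ∉ 𝔭 ∧ p ∈ S.lifts {c | ↑q * c ∈ O} := by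
  induction hp using Subgroup.closure_induction with
  | mem p hp =>
    obtain ⟨i, j, hij, c, ⟨q, hq, hqc⟩, rfl⟩ := hp
    exact ⟨q, hq, lift_mem_lifts hij hqc⟩
  | one => exact ⟨1, Ideal.IsPrime.one_notMem ‹_›, one_mem _⟩
  | mul p p' _ _ hp hp' =>
    obtain ⟨q, hq, hqp⟩ := hp
    obtain ⟨q', hq', hqp'⟩ := hp'
    refine ⟨q * q', Ideal.IsPrime.mul_notMem ‹_› hq hq', mul_mem ?_ ?_⟩
    · refine lifts_comp id (fun c hc ↦ ?_) hqp
      simpa [mul_right_comm] using mul_mem hc q'.2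
    · refine lifts_comp id (fun c hc ↦ ?_) hqp'
      simpa [mul_assoc] using mul_mem q.2 hc
  | inv p _ hp =>
    obtain ⟨q, hq, hqp⟩ := hp
    exact ⟨q, hq, inv_mem hqp⟩

lemma exists_mem_lifts_mk_eq (M : SL(n, GermsAt O 𝔭)) :
    ∃ M' : SL(n, fractionsAt O 𝔭),
      Matrix.SpecialLinearGroup.map (GermsAt.mk O 𝔭) M' = M ∧
      ∃ p ∈ S.lifts (fractionsAt O 𝔭 : Set (T → ℂ)),
        ∀ x, (p x).1 = evalFamily n (fractionsAt O 𝔭) M' x := by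
  set liftable : Subgroup SL(n, fractionsAt O 𝔭) :=
    ((S.lifts (fractionsAt O 𝔭 : Set (T → ℂ))).map
      ((MonoidHom.fst SL(n, ℂ) Aˣ).compLeft T)).comap (evalFamily n (fractionsAt O 𝔭))
  have htop : liftable.map
      (Matrix.SpecialLinearGroup.map (GermsAt.mk O 𝔭)) = ⊤ := by
    refine eq_top_of_transvection_mem fun k l hkl t ↦ ?_
    obtain ⟨c, rfl⟩ := GermsAt.mk_surjective t
    exact ⟨𝐞 hkl c, ⟨_, lift_mem_lifts hkl c.2, (evalFamily_transvection hkl c).symm⟩,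
      map_transvection _ hkl c⟩
  obtain ⟨M', ⟨p, hp, hpM'⟩, hM'⟩ := htop.ge (Subgroup.mem_top M)
  exact ⟨M', hM', p, hp, congrFun hpM'⟩

lemma exists_lift_near (𝔭 : Ideal O) [𝔭.IsPrime] (M : SL(n, O)) :
    ∃ q : O, q ∉ 𝔭 ∧ ∃ p ∈ S.lifts (fractionsAt O 𝔭 : Set (T → ℂ)),
      ∀ x, (q : T → ℂ) x ≠ 0 → (p x).1 = evalFamily n O M x := by
  set ι : O →+* fractionsAt O 𝔭 := (Subalgebra.inclusion (le_fractionsAt O 𝔭)).toRingHom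
  obtain ⟨M', hM', p, hp, hpM'⟩ := exists_mem_lifts_mk_eq (S := S) (𝔭 := 𝔭)
    (Matrix.SpecialLinearGroup.map (GermsAt.mk O 𝔭) (Matrix.SpecialLinearGroup.map ι M))
  have hentry : ∀ a b, ∃ q : O, q ∉ 𝔭 ∧ (q : T → ℂ) * (M' a b - ι (M a b) : fractionsAt O 𝔭) = 0 :=
    fun a b ↦ GermsAt.mk_eq_mk.1 (congrFun₂ (congrArg Subtype.val hM') a b)
  choose q hq hqM using hentry
  refine ⟨∏ a, ∏ b, q a b, ?_, p, hp, fun x hx ↦ ?_⟩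
  · simp [Ideal.IsPrime.prod_mem_iff, hq]
  · rw [hpM']
    refine Matrix.SpecialLinearGroup.ext _ _ fun a b ↦ sub_eq_zero.1 ?_
    have hqx : (q a b : T → ℂ) x ≠ 0 := by
      have hprod : evalAt O x (∏ a, ∏ b, q a b) ≠ 0 := hx
      simp only [map_prod, Finset.prod_ne_zero_iff] at hprod
      exact hprod a (Finset.mem_univ a) b (Finset.mem_univ b)
    exact (mul_eq_zero.1 (congrFun (hqM a b) x)).resolve_left hqx

lemma comp_fst_mem {p : T → SL(n, ℂ) × Aˣ} (hp : p ∈ S.lifts (O : Set (T → ℂ)))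
    {f : SL(n, ℂ) → ℂ} (hf : f ∈ regularFunctions n) : (fun x ↦ f (p x).1) ∈ O := by
  obtain ⟨M, hM⟩ := exists_evalFamily_eq_fst hp
  obtain ⟨P, hP⟩ := mem_regularFunctions.1 hf
  have hcomp : (fun x ↦ f (p x).1) = MvPolynomial.aeval (fun q ↦ (M q.1 q.2 : T → ℂ)) P := by
    funext x
    rw [aeval_apply_eq_eval, ← hP, ← hM]
    rfl
  have hmem : (MvPolynomial.aeval fun q : Fin n × Fin n ↦ (M q.1 q.2 : T → ℂ)).range ≤ O := by
    rw [← Algebra.adjoin_range_eq_range_aeval, Algebra.adjoin_le_iff]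
    rintro _ ⟨q, rfl⟩
    exact (M q.1 q.2).2
  exact hcomp ▸ hmem ⟨P, rfl⟩

lemma exists_lifts_polyFunctions {p : SL(n, ℂ) × Aˣ} (hp : p ∈ S.graph) :
    ∃ γ ∈ S.lifts (polyFunctions : Set (ℂ → ℂ)), γ 0 = 1 ∧ γ 1 = p := by
  induction hp using Subgroup.closure_induction with
  | mem p hp =>
    obtain ⟨i, j, hij, t, rfl⟩ := hp
    have hlinear : (fun z ↦ t * z) ∈ polyFunctions :=
      mem_polyFunctions.2 ⟨.C t * .X, fun z ↦ by simp⟩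
    exact ⟨_, lift_mem_lifts hij hlinear, by simp [lift_zero], by simp⟩
  | one => exact ⟨1, one_mem _, rfl, rfl⟩
  | mul p q _ _ hp hq =>
    obtain ⟨γ, hγ, hγ0, hγ1⟩ := hp
    obtain ⟨δ, hδ, hδ0, hδ1⟩ := hq
    exact ⟨γ * δ, mul_mem hγ hδ, by simp [hγ0, hδ0], by simp [hγ1, hδ1]⟩
  | inv p _ hp =>
    obtain ⟨γ, hγ, hγ0, hγ1⟩ := hp
    exact ⟨γ⁻¹, inv_mem hγ, by simp [hγ0], by simp [hγ1]⟩

lemma lifts_comp_differentiableOn {φ : ℂ → T} (hφ : ∀ f ∈ O, Differentiable ℂ (f ∘ φ))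
    {q : O} {p : T → SL(n, ℂ) × Aˣ} (hp : p ∈ S.lifts {c | ↑q * c ∈ O}) :
    p ∘ φ ∈ S.lifts {c | DifferentiableOn ℂ c {z | (q : T → ℂ) (φ z) ≠ 0}} := by
  refine lifts_comp φ (fun c hc ↦ ?_) hp
  refine (((hφ _ hc).differentiableOn).div (hφ q q.2).differentiableOn fun z hz ↦ hz).congr
    fun z hz ↦ ?_
  exact (mul_div_cancel_left₀ (c (φ z)) (show (q : T → ℂ) (φ z) ≠ 0 from hz)).symm

theorem snd_eq_one_of_fst_eq_one (hn : 3 ≤ n) {p : SL(n, ℂ) × Aˣ} (hp : p ∈ S.graph)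
    (hp1 : p.1 = 1) : p.2 = 1 := by
  obtain ⟨γ, hγ, hγ0, hγ1⟩ := exists_lifts_polyFunctions hp
  set φ : ℂ → SL(n, ℂ) := fun z ↦ (γ z).1
  have hφ : ∀ f ∈ regularFunctions n, f ∘ φ ∈ polyFunctions := fun f hf ↦ comp_fst_mem hγ hf
  have hprime : (RingHom.ker (evalAt (regularFunctions n) 1)).IsPrime := RingHom.ker_isPrime _
  obtain ⟨q, hq, σ, hσ, hqσ⟩ := exists_lift_near (S := S)
    (RingHom.ker (evalAt (regularFunctions n) 1)) (genericMatrix n)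
  obtain ⟨r, hr, hσr⟩ := exists_common_denominator hσ
  set U : Set ℂ := {z | (q * r).1 (φ z) ≠ 0}
  have hU : IsOpen U :=
    isOpen_ne_fun (differentiable_of_mem_polyFunctions (hφ _ (q * r).2)).continuous continuous_const
  have hU' : IsPreconnected U := isPreconnected_ne_zero_of_mem_polyFunctions (hφ _ (q * r).2)
  have hmemU : ∀ z, φ z = 1 → z ∈ U := fun z hz ↦ by
    change (q * r).1 (φ z) ≠ 0
    rw [hz]
    exact mul_ne_zero hq hr
  have hlift : γ * (σ ∘ φ)⁻¹ ∈ S.lifts {c | DifferentiableOn ℂ c U} := by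
    refine mul_mem (lifts_comp id (fun c hc ↦ ?_) hγ) (inv_mem (lifts_comp id (fun c hc ↦ ?_)
      (lifts_comp_differentiableOn
        (fun f hf ↦ differentiable_of_mem_polyFunctions (hφ f hf)) hσr)))
    · exact (differentiable_of_mem_polyFunctions hc).differentiableOn
    · exact hc.mono fun z hz ↦ right_ne_zero_of_mul hz
  have hfst : ∀ z ∈ U, ((γ * (σ ∘ φ)⁻¹) z).1 = 1 := fun z hz ↦ by
    have hσz : (σ (φ z)).1 = φ z := hqσ (φ z) (left_ne_zero_of_mul hz)
    simp [hσz, φ]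
  have hsnd := snd_eq_snd_of_fst_eq_one hn hU hU' hlift hfst (hmemU 1 (by simp [φ, hγ1, hp1]))
    (hmemU 0 (by simp [φ, hγ0]))
  simpa [hγ0, hγ1, φ, hp1] using hsnd

theorem exists_hom (hn : 3 ≤ n) (S : SteinbergSystem n A) :
    ∃ r : SL(n, ℂ) →* Aˣ, ∀ p ∈ S.graph, r p.1 = p.2 := by
  have hfst : S.graph.map (MonoidHom.fst SL(n, ℂ) Aˣ) = ⊤ :=
    eq_top_of_transvection_mem fun k l hkl t ↦
      ⟨S.lift hkl t, Subgroup.subset_closure ⟨k, l, hkl, t, rfl⟩, rfl⟩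
  have hexists : ∀ g : SL(n, ℂ), ∃ u : Aˣ, (g, u) ∈ S.graph := fun g ↦ by
    obtain ⟨p, hp, rfl⟩ := hfst.ge (Subgroup.mem_top g)
    exact ⟨p.2, hp⟩
  choose r hr using hexists
  have hunique : ∀ p ∈ S.graph, r p.1 = p.2 := fun p hp ↦
    mul_inv_eq_one.1 <|
      snd_eq_one_of_fst_eq_one hn (mul_mem (hr p.1) (inv_mem hp)) (mul_inv_cancel p.1)
  exact ⟨MonoidHom.mk' r fun g h ↦ hunique _ (mul_mem (hr g) (hr h)), hunique⟩

end SteinbergSystem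

section PolynomialMatrices

/-- The matrix-valued functions on `T` whose entries belong to the function algebra `B`. -/
def matrixFunctions {K T : Type*} [Field K] (ι : Type*) [Fintype ι] [DecidableEq ι]
    (B : Subalgebra K (T → K)) : Subalgebra K (T → Matrix ι ι K) where
  carrier := {F | ∀ a b, (fun x ↦ F x a b) ∈ B}
  mul_mem' {F G} hF hG a b := by
    have hsum : (fun x ↦ (F * G) x a b) = ∑ c, (fun x ↦ F x a c) * fun x ↦ G x c b := by
      funext x
      simp [Matrix.mul_apply]
    exact hsum ▸ sum_mem fun c _ ↦ mul_mem (hF a c) (hG c b)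
  add_mem' hF hG a b := add_mem (hF a b) (hG a b)
  algebraMap_mem' r a b := B.algebraMap_mem (algebraMap K (Matrix ι ι K) r a b)

/-- The polynomial functions in the coordinates indexed by `σ`. -/
noncomputable def mvPolyFunctions (σ : Type*) : Subalgebra ℂ ((σ → ℂ) → ℂ) :=
  (MvPolynomial.aeval fun i (z : σ → ℂ) ↦ z i).range

lemma mem_mvPolyFunctions {σ : Type*} {f : (σ → ℂ) → ℂ} :
    f ∈ mvPolyFunctions σ ↔ ∃ P : MvPolynomial σ ℂ, ∀ z, MvPolynomial.eval z P = f z := by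
  simp [mvPolyFunctions, funext_iff, aeval_apply_eq_eval]

lemma coord_mem_mvPolyFunctions {σ : Type*} (i : σ) : (fun z ↦ z i) ∈ mvPolyFunctions σ :=
  mem_mvPolyFunctions.2 ⟨.X i, fun _ ↦ MvPolynomial.eval_X i⟩

variable {ι : Type*} [Fintype ι] [DecidableEq ι]

lemma const_mem_matrixFunctions {K T : Type*} [Field K] {B : Subalgebra K (T → K)}
    (M : Matrix ι ι K) : (fun _ ↦ M) ∈ matrixFunctions ι B :=
  fun a b ↦ B.algebraMap_mem (M a b)

lemma comp_mem_matrixFunctions {T : Type*} {B : Subalgebra ℂ (T → ℂ)} {F : ℂ → Matrix ι ι ℂ}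
    (hF : F ∈ matrixFunctions ι polyFunctions) {c : T → ℂ} (hc : c ∈ B) :
    (fun x ↦ F (c x)) ∈ matrixFunctions ι B := fun a b ↦ by
  obtain ⟨P, hP⟩ := mem_polyFunctions.1 (hF a b)
  have haeval : (fun x ↦ F (c x) a b) = Polynomial.aeval c P := by
    funext x
    rw [Polynomial.aeval_fn_apply, Polynomial.coe_aeval_eq_eval, hP]
  exact haeval ▸ Algebra.adjoin_singleton_le hc
    (Polynomial.aeval_mem_adjoin_singleton ℂ c)

lemma eq_of_forall_mul_natCast {σ : Type*} {F G : (σ → ℂ) → Matrix ι ι ℂ}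
    (hF : F ∈ matrixFunctions ι (mvPolyFunctions σ))
    (hG : G ∈ matrixFunctions ι (mvPolyFunctions σ)) {m : ℂ} (hm : m ≠ 0)
    (h : ∀ k : σ → ℕ, F (fun i ↦ m * k i) = G (fun i ↦ m * k i)) : F = G := by
  have hinfinite : (Set.range fun k : ℕ ↦ m * k).Infinite :=
    Set.infinite_range_of_injective fun k l hkl ↦ Nat.cast_injective (mul_left_cancel₀ hm hkl)
  funext z
  ext a b
  obtain ⟨P, hP⟩ := mem_mvPolyFunctions.1 (hF a b)
  obtain ⟨Q, hQ⟩ := mem_mvPolyFunctions.1 (hG a b)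
  have hPQ : P = Q := by
    refine MvPolynomial.funext_set (fun _ ↦ Set.range fun k : ℕ ↦ m * k) (fun _ ↦ hinfinite)
      fun z hz ↦ ?_
    choose k hk using fun i ↦ hz i (Set.mem_univ i)
    obtain rfl : (fun i ↦ m * k i) = z := funext hk
    rw [hP, hQ, h]
  rw [← hP, ← hQ, hPQ]

lemma exists_matrixFunctions_eq_pow {u : Matrix ι ι ℂ} (hu : IsNilpotent (u - 1)) :
    ∃ P ∈ matrixFunctions ι polyFunctions, ∀ k : ℕ, P k = u ^ k := by
  obtain ⟨m, hm⟩ := hu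
  set binomial : ℕ → ℂ → ℂ := fun j t ↦ (j.factorial : ℂ)⁻¹ * (descPochhammer ℂ j).eval t
  have hbinomial (j k : ℕ) : binomial j k = k.choose j := by
    have hfactorial : (j.factorial : ℂ) ≠ 0 := Nat.cast_ne_zero.2 j.factorial_ne_zero
    simp only [binomial, descPochhammer_eval_eq_descFactorial,
      Nat.descFactorial_eq_factorial_mul_choose, Nat.cast_mul, inv_mul_cancel_left₀ hfactorial]
  refine ⟨fun t ↦ ∑ j ∈ Finset.range m, binomial j t • (u - 1) ^ j, fun a b ↦ ?_, fun k ↦ ?_⟩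
  · refine mem_polyFunctions.2 ⟨∑ j ∈ Finset.range m,
      .C (j.factorial : ℂ)⁻¹ * descPochhammer ℂ j * .C (((u - 1) ^ j) a b), fun t ↦ ?_⟩
    simp [Polynomial.eval_finsetSum, Matrix.sum_apply, binomial]
  · calc ∑ j ∈ Finset.range m, binomial j k • (u - 1) ^ j
      _ = ∑ j ∈ Finset.range (k + 1), (u - 1) ^ j * 1 ^ (k - j) * k.choose j := by
        refine Finset.sum_congr_of_eq_on_inter (fun j _ hj ↦ ?_) (fun j _ hj ↦ ?_) fun j _ _ ↦ ?_
        · rw [Finset.mem_range, not_lt] at hj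
          rw [hbinomial, Nat.choose_eq_zero_of_lt hj, Nat.cast_zero, zero_smul]
        · rw [Finset.mem_range, not_lt] at hj
          rw [pow_eq_zero_of_le hj hm, zero_mul, zero_mul]
        · rw [hbinomial, one_pow, mul_one, Nat.cast_smul_eq_nsmul, nsmul_eq_mul, Nat.cast_comm]
      _ = u ^ k := by rw [← (Commute.one_right (u - 1)).add_pow, sub_add_cancel]

open scoped Matrix.Norms.Operator in
lemma differentiable_of_mem_matrixFunctions {F : ℂ → Matrix ι ι ℂ}
    (hF : F ∈ matrixFunctions ι polyFunctions) : Differentiable ℂ F := by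
  have hsum : F = fun t ↦ ∑ a, ∑ b, F t a b • Matrix.single a b (1 : ℂ) := by
    funext t
    conv_lhs => rw [Matrix.matrix_eq_sum_single (F t)]
    simp [Matrix.smul_single]
  rw [hsum]
  exact Differentiable.fun_sum fun a _ ↦ Differentiable.fun_sum fun b _ ↦
    (differentiable_of_mem_polyFunctions (hF a b)).smul_const _

end PolynomialMatrices

section Algebraicity

open scoped Matrix.Norms.Operator

variable {n : ℕ} {ι : Type*} [Fintype ι] [DecidableEq ι]

lemma exists_matrixFunctions_eq_transvection {ρ : SL(n, ℤ) →* GL ι ℂ} {i j : Fin n} (hij : i ≠ j)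
    (hρ : IsNilpotent ((ρ (𝐞 hij 2)).1 - 1)) :
    ∃ X ∈ matrixFunctions ι polyFunctions, ∀ k : ℕ, X (2 * k) = (ρ (𝐞 hij (2 * k))).1 := by
  obtain ⟨P, hP, hPρ⟩ := exists_matrixFunctions_eq_pow hρ
  have hhalf : (fun t : ℂ ↦ t / 2) ∈ polyFunctions :=
    mem_polyFunctions.2 ⟨.C 2⁻¹ * .X, fun t ↦ by simp [div_eq_inv_mul]⟩
  refine ⟨fun t ↦ P (t / 2), comp_mem_matrixFunctions hP hhalf, fun k ↦ ?_⟩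
  have hpow : 𝐞 hij (2 * k : ℤ) = 𝐞 hij 2 ^ k := by
    simpa [mul_comm] using transvection_intCast hij (2 : ℤ) k
  simp only [mul_div_cancel_left₀ _ (two_ne_zero' ℂ), hPρ, hpow, map_pow, Units.val_pow_eq_pow_val]

theorem exists_steinbergSystem (ρ : SL(n, ℤ) →* GL ι ℂ)
    (hρ : ∀ {i j : Fin n} (hij : i ≠ j), IsNilpotent ((ρ (𝐞 hij 2)).1 - 1)) :
    ∃ S : SteinbergSystem n (Matrix ι ι ℂ), ∀ {i j : Fin n} (hij : i ≠ j),
      S.X hij ∈ matrixFunctions ι polyFunctions ∧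
        ∀ k : ℕ, S.X hij (2 * k) = (ρ (𝐞 hij (2 * k))).1 := by
  choose X hX hXρ using fun {i j : Fin n} (hij : i ≠ j) ↦
    exists_matrixFunctions_eq_transvection hij (hρ hij)
  have hX' {i j : Fin n} (hij : i ≠ j) {c : (Fin 2 → ℂ) → ℂ} (hc : c ∈ mvPolyFunctions (Fin 2)) :
      (fun z ↦ X hij (c z)) ∈ matrixFunctions ι (mvPolyFunctions (Fin 2)) :=
    comp_mem_matrixFunctions (hX hij) hc
  have h₀ := coord_mem_mvPolyFunctions (0 : Fin 2)
  have h₁ := coord_mem_mvPolyFunctions (1 : Fin 2)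
  refine ⟨{
    X := X
    differentiable := fun hij ↦ differentiable_of_mem_matrixFunctions (hX hij)
    map_zero := fun hij ↦ by simpa using hXρ hij 0
    map_add := fun hij s t ↦ ?_
    mul_comm := fun hij hkl hjk hil s t ↦ ?_
    mul_mul := fun hij hjk hik s t ↦ ?_ }, fun hij ↦ ⟨hX hij, hXρ hij⟩⟩
  · refine congrFun (eq_of_forall_mul_natCast (hX' hij (add_mem h₀ h₁))
      (mul_mem (hX' hij h₀) (hX' hij h₁)) two_ne_zero fun k ↦ ?_) ![s, t]
    have hadd := hXρ hij (k 0 + k 1)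
    push_cast [mul_add, transvection_add, map_mul] at hadd
    simpa only [Pi.mul_apply, Pi.add_apply, hXρ] using hadd
  · refine congrFun (eq_of_forall_mul_natCast (mul_mem (hX' hij h₀) (hX' hkl h₁))
      (mul_mem (hX' hkl h₁) (hX' hij h₀)) two_ne_zero fun k ↦ ?_) ![s, t]
    simp only [Pi.mul_apply, hXρ, ← Units.val_mul, ← map_mul,
      transvection_mul_comm hij hkl hjk hil]
  · refine congrFun (eq_of_forall_mul_natCast (mul_mem (hX' hij h₀) (hX' hjk h₁))
      (mul_mem (mul_mem (hX' hik (mul_mem h₀ h₁)) (hX' hjk h₁)) (hX' hij h₀))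
      two_ne_zero fun k ↦ ?_) ![s, t]
    have hmul := hXρ hik (2 * k 0 * k 1)
    push_cast [mul_assoc] at hmul
    simp only [Pi.mul_apply, mul_assoc, mul_left_comm _ (2 : ℂ), hmul, hXρ, ← Units.val_mul,
      ← map_mul, transvection_mul_transvection hij hjk hik, mul_left_comm _ (2 : ℤ)]

variable {S : SteinbergSystem n (Matrix ι ι ℂ)}

lemma snd_mem_matrixFunctions
    (hS : ∀ {i j : Fin n} (hij : i ≠ j), S.X hij ∈ matrixFunctions ι polyFunctions)
    {T : Type*} {B : Subalgebra ℂ (T → ℂ)} {p : T → SL(n, ℂ) × GL ι ℂ}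
    (hp : p ∈ S.lifts (B : Set (T → ℂ))) : (fun x ↦ (p x).2.1) ∈ matrixFunctions ι B := by
  induction hp using Subgroup.closure_induction'' with
  | mem p hp =>
    obtain ⟨i, j, hij, c, hc, rfl⟩ := hp
    exact comp_mem_matrixFunctions (hS hij) hc
  | inv_mem p hp =>
    obtain ⟨i, j, hij, c, hc, rfl⟩ := hp
    exact comp_mem_matrixFunctions (hS hij) (neg_mem hc)
  | one => exact one_mem _
  | mul p q _ _ hp hq => exact mul_mem hp hq

theorem hom_mem_matrixFunctions
    (hS : ∀ {i j : Fin n} (hij : i ≠ j), S.X hij ∈ matrixFunctions ι polyFunctions)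
    {r : SL(n, ℂ) →* GL ι ℂ} (hr : ∀ p ∈ S.graph, r p.1 = p.2) :
    (fun g ↦ (r g).1) ∈ matrixFunctions ι (regularFunctions n) := by
  refine fun a b ↦ mem_of_forall_mem_fractionsAt fun 𝔪 h𝔪 ↦ ?_
  obtain ⟨q, hq, p, hp, hqp⟩ := SteinbergSystem.exists_lift_near (S := S) 𝔪 (genericMatrix n)
  obtain ⟨q', hq', hpq'⟩ := snd_mem_matrixFunctions hS hp a b
  refine ⟨q * q', Ideal.IsPrime.mul_notMem h𝔪.isPrime hq hq', ?_⟩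
  convert mul_mem q.2 hpq' using 1
  funext g
  by_cases hg : (q : SL(n, ℂ) → ℂ) g = 0
  · simp [hg]
  · have hrg : r g = (p g).2 := by
      rw [← hr _ (SteinbergSystem.apply_mem_graph hp g), hqp g hg,
        evalFamily_genericMatrix, id]
    simp [hrg, mul_assoc]

end Algebraicity

section Twist

variable {n : ℕ}

lemma transvection_mem_of_forall_not_opposite {R : Type*} [CommRing R] (hn : 3 ≤ n)
    {H : Subgroup SL(n, R)} {k l : Fin n} (hkl : k ≠ l)
    (hH : ∀ (i j : Fin n) (hij : i ≠ j) (t : R), ¬(i = k ∧ j = l) → 𝐞 hij t ∈ H) (t : R) :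
    𝐞 hkl t ∈ H := by
  obtain ⟨p, hpk, hpl⟩ := Fin.exists_ne_and_ne_of_two_lt k l hn
  have hcomm := transvection_mul_transvection hpk.symm hpl hkl 1 t
  rw [one_mul, mul_assoc, ← mul_inv_eq_iff_eq_mul] at hcomm
  have hfst : 𝐞 hpk.symm 1 ∈ H := hH _ _ _ 1 fun h ↦ hpl h.2
  have hsnd : 𝐞 hpl t ∈ H := hH _ _ _ t fun h ↦ hpk h.1
  exact hcomm ▸ mul_mem (mul_mem hfst hsnd) (inv_mem (mul_mem hsnd hfst))

lemma transvection_conj_mem {R : Type*} [CommRing R] {H : Subgroup SL(n, R)} {I : Ideal R}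
    (hH : ∀ (i j : Fin n) (hij : i ≠ j), ∀ t ∈ I, 𝐞 hij t ∈ H) {i j k l : Fin n} (hij : i ≠ j)
    (hkl : k ≠ l) (hopp : ¬(i = l ∧ j = k)) (s : R) {t : R} (ht : t ∈ I) :
    𝐞 hkl s * 𝐞 hij t * (𝐞 hkl s)⁻¹ ∈ H := by
  by_cases hli : l = i
  · subst hli
    have hkj : k ≠ j := fun h ↦ hopp ⟨rfl, h.symm⟩
    rw [transvection_mul_transvection hkl hij hkj, mul_inv_cancel_right]
    exact mul_mem (hH _ _ hkj _ (I.mul_mem_left s ht)) (hH _ _ hij _ ht)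
  by_cases hkj : j = k
  · subst hkj
    rw [mul_assoc, transvection_inv, transvection_mul_transvection hij hkl (Ne.symm hli),
      ← mul_assoc, ← mul_assoc, transvection_mul_comm hkl (Ne.symm hli) hli hkl,
      ← transvection_inv, mul_inv_cancel_right]
    exact mul_mem (hH _ _ _ _ (I.mul_mem_right _ ht)) (hH _ _ hij _ ht)
  · rw [transvection_mul_comm hkl hij hli (Ne.symm hkj), mul_inv_cancel_right]
    exact hH _ _ hij _ ht

/-- For two homomorphisms `ρ, r : G →* H`, the subgroup of those `a` such that conjugation by
`ρ a` acts on the image of `r` as conjugation by `r a`. -/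
def conjLocus {G H : Type*} [Group G] [Group H] (ρ r : G →* H) : Subgroup G where
  carrier := {a | ∀ b, ρ a * r b * (ρ a)⁻¹ = r (a * b * a⁻¹)}
  one_mem' b := by simp
  mul_mem' {a a'} ha ha' b := by
    rw [map_mul, _root_.mul_inv_rev, _root_.mul_inv_rev]
    calc ρ a * ρ a' * r b * ((ρ a')⁻¹ * (ρ a)⁻¹) = ρ a * (ρ a' * r b * (ρ a')⁻¹) * (ρ a)⁻¹ := by
          group
      _ = r (a * a' * b * (a'⁻¹ * a⁻¹)) := by
          rw [ha' b, ha]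
          congr 1
          group
  inv_mem' {a} ha b := by
    have hb := ha (a⁻¹ * b * a)
    rw [show a * (a⁻¹ * b * a) * a⁻¹ = b by group] at hb
    rw [← hb, map_inv, inv_inv]
    group

lemma exists_eq_mul_of_conjLocus_eq_top {G H : Type*} [Group G] [Group H] {ρ r : G →* H}
    (h : conjLocus ρ r = ⊤) : ∃ σ : G →* H, ∀ a, ρ a = σ a * r a := by
  have hconj (a b : G) : ρ a * r b * (ρ a)⁻¹ = r (a * b * a⁻¹) := h.ge (Subgroup.mem_top a) b
  refine ⟨MonoidHom.mk' (fun a ↦ ρ a * (r a)⁻¹) fun a b ↦ ?_, fun a ↦ by simp⟩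
  have hb := hconj b (b⁻¹ * a * b)
  rw [show b * (b⁻¹ * a * b) * b⁻¹ = a by group, mul_inv_eq_iff_eq_mul] at hb
  simp only [map_mul, map_inv] at hb ⊢
  have hcomm : ρ b * (r b)⁻¹ * (r a)⁻¹ = (r a)⁻¹ * (ρ b * (r b)⁻¹) := by
    rw [mul_inv_eq_iff_eq_mul, mul_assoc, eq_inv_mul_iff_mul_eq, ← mul_assoc, ← hb]
    group
  simp only [mul_assoc, _root_.mul_inv_rev] at hcomm ⊢
  rw [hcomm]

variable {ι : Type*} [Fintype ι] [DecidableEq ι]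

/-- The inclusion of `SL(n, ℤ)` into `SL(n, ℂ)`. -/
abbrev toComplex (n : ℕ) : SL(n, ℤ) →* SL(n, ℂ) :=
  Matrix.SpecialLinearGroup.map (Int.castRingHom ℂ)

lemma toComplex_transvection {i j : Fin n} (hij : i ≠ j) (t : ℤ) :
    toComplex n (𝐞 hij t) = 𝐞 hij (t : ℂ) :=
  map_transvection _ hij t

variable {ρ : SL(n, ℤ) →* GL ι ℂ} {r : SL(n, ℂ) →* GL ι ℂ}

lemma conj_transvection_eq (hr : ∀ {i j : Fin n} (hij : i ≠ j),
      (fun t ↦ (r (𝐞 hij t)).1) ∈ matrixFunctions ι polyFunctions)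
    (hρ : ∀ (i j : Fin n) (hij : i ≠ j), ∀ t ∈ Ideal.span {(2 : ℤ)},
      ρ (𝐞 hij t) = r (toComplex n (𝐞 hij t)))
    {i j k l : Fin n} (hij : i ≠ j) (hkl : k ≠ l) (hopp : ¬(i = l ∧ j = k)) (t : ℤ) :
    ρ (𝐞 hkl 1) * r (toComplex n (𝐞 hij t)) * (ρ (𝐞 hkl 1))⁻¹ =
      r (toComplex n (𝐞 hkl 1 * 𝐞 hij t * (𝐞 hkl 1)⁻¹)) := by
  set conjBy : GL ι ℂ → ℂ → Matrix ι ι ℂ := fun u z ↦ (u * r (𝐞 hij z) * u⁻¹).1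
  have hpoly (u : GL ι ℂ) : (fun z : Unit → ℂ ↦ conjBy u (z ())) ∈
      matrixFunctions ι (mvPolyFunctions Unit) :=
    comp_mem_matrixFunctions (mul_mem (mul_mem (const_mem_matrixFunctions u.1) (hr hij))
      (const_mem_matrixFunctions u⁻¹.1)) (coord_mem_mvPolyFunctions ())
  have heven (m : Unit → ℕ) : conjBy (ρ (𝐞 hkl 1)) (2 * m ()) =
      conjBy (r (toComplex n (𝐞 hkl 1))) (2 * m ()) := by
    have hm : (2 * m () : ℤ) ∈ Ideal.span {(2 : ℤ)} :=
      Ideal.mem_span_singleton.2 (dvd_mul_right _ _)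
    have hconj := transvection_conj_mem (H := ρ.eqLocus (r.comp (toComplex n)))
      hρ hij hkl hopp 1 hm
    have hcast : r (𝐞 hij (2 * m () : ℂ)) = ρ (𝐞 hij (2 * m ())) := by
      rw [hρ _ _ hij _ hm, toComplex_transvection]
      norm_cast
    simp only [conjBy, hcast]
    change ρ _ = r (toComplex n _) at hconj
    rw [map_mul, map_mul, map_mul, map_mul, map_mul, map_mul, ← hρ _ _ hij _ hm] at hconj
    simpa only [map_inv] using congrArg Units.val hconj
  have heq := congrFun (eq_of_forall_mul_natCast (hpoly (ρ (𝐞 hkl 1)))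
    (hpoly (r (toComplex n (𝐞 hkl 1)))) two_ne_zero heven) fun _ ↦ t
  simpa only [map_mul, map_inv, toComplex_transvection] using Units.ext heq

lemma transvection_one_mem_conjLocus (hn : 3 ≤ n) (hr : ∀ {i j : Fin n} (hij : i ≠ j),
      (fun t ↦ (r (𝐞 hij t)).1) ∈ matrixFunctions ι polyFunctions)
    (hρ : ∀ (i j : Fin n) (hij : i ≠ j), ∀ t ∈ Ideal.span {(2 : ℤ)},
      ρ (𝐞 hij t) = r (toComplex n (𝐞 hij t))) {k l : Fin n} (hkl : k ≠ l) :
    𝐞 hkl 1 ∈ conjLocus ρ (r.comp (toComplex n)) := by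
  set r' := r.comp (toComplex n)
  set equalizer : Subgroup SL(n, ℤ) := ((MulAut.conj (ρ (𝐞 hkl 1))).toMonoidHom.comp r').eqLocus
    (r'.comp (MulAut.conj (𝐞 hkl 1)).toMonoidHom)
  have hmem (i j : Fin n) (hij : i ≠ j) (t : ℤ) (hopp : ¬(i = l ∧ j = k)) : 𝐞 hij t ∈ equalizer :=
    conj_transvection_eq hr hρ hij hkl hopp t
  have htop : equalizer = ⊤ := eq_top_of_transvection_one_mem fun i j hij ↦ by
    by_cases hopp : i = l ∧ j = k
    · obtain ⟨rfl, rfl⟩ := hopp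
      exact transvection_mem_of_forall_not_opposite hn hij hmem 1
    · exact hmem i j hij 1 hopp
  exact fun b ↦ htop.ge (Subgroup.mem_top b)

theorem exists_eq_mul_of_eq_transvection_two (hn : 3 ≤ n) (hr : ∀ {i j : Fin n} (hij : i ≠ j),
      (fun t ↦ (r (𝐞 hij t)).1) ∈ matrixFunctions ι polyFunctions)
    (hρ : ∀ {i j : Fin n} (hij : i ≠ j), ρ (𝐞 hij 2) = r (𝐞 hij 2)) :
    ∃ σ : SL(n, ZMod 2) →* GL ι ℂ, ∀ γ, ρ γ = σ (modTwo n γ) * r (toComplex n γ) := by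
  have heven (i j : Fin n) (hij : i ≠ j) (t : ℤ) (ht : t ∈ Ideal.span {(2 : ℤ)}) :
      ρ (𝐞 hij t) = r (toComplex n (𝐞 hij t)) := by
    obtain ⟨m, rfl⟩ := Ideal.mem_span_singleton'.1 ht
    rw [← Int.cast_id (n := m), transvection_intCast, map_zpow, map_zpow, map_zpow, hρ,
      toComplex_transvection, Int.cast_ofNat]
  obtain ⟨σ, hσ⟩ := exists_eq_mul_of_conjLocus_eq_top <|
    eq_top_of_transvection_one_mem fun k l hkl ↦ transvection_one_mem_conjLocus hn hr heven hkl
  have hσ_two (k l : Fin n) (hkl : k ≠ l) (t : ℤ) : σ (𝐞 hkl (2 * t)) = 1 := by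
    have := hσ (𝐞 hkl (2 * t))
    rw [heven k l hkl _ (Ideal.mem_span_singleton.2 (dvd_mul_right _ _))] at this
    exact right_eq_mul.1 this
  have hσ_inv {k l : Fin n} (hkl : k ≠ l) : σ (𝐞 hkl (-1)) = σ (𝐞 hkl 1) := by
    rw [← mul_one (σ (𝐞 hkl (-1))), ← hσ_two k l hkl 1, ← map_mul, ← transvection_add]
    norm_num
  have hσ_sq {k l : Fin n} (hkl : k ≠ l) : σ (𝐞 hkl 1) * σ (𝐞 hkl 1) = 1 := by
    rw [← map_mul, ← transvection_add]
    exact hσ_two k l hkl 1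
  have hker : (modTwo n).ker ≤ σ.ker := ker_modTwo_le hσ_two fun k l hkl ↦ by
    rw [MonoidHom.mem_ker, weyl, map_pow, map_mul, map_mul, hσ_inv]
    calc (σ (𝐞 hkl 1) * σ (𝐞 hkl.symm 1) * σ (𝐞 hkl 1)) ^ 2
      _ = σ (𝐞 hkl 1) * (σ (𝐞 hkl.symm 1) * (σ (𝐞 hkl 1) * σ (𝐞 hkl 1)) * σ (𝐞 hkl.symm 1)) *
          σ (𝐞 hkl 1) := by simp only [sq, mul_assoc]
      _ = 1 := by simp only [hσ_sq, mul_one]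
  exact ⟨(modTwo n).liftOfSurjective modTwo_surjective ⟨σ, hker⟩, fun γ ↦ by
    rw [MonoidHom.liftOfRightInverse_comp_apply, hσ]
    rfl⟩

end Twist

section BinaryVectors

lemma forall_zmodTwo {p : ZMod 2 → Prop} : (∀ a, p a) ↔ p 0 ∧ p 1 := Fin.forall_fin_two

lemma zmodTwo_eq_zero_or_one : ∀ a : ZMod 2, a = 0 ∨ a = 1 := by decide

variable {V : Type*} [AddCommGroup V] [Module (ZMod 2) V] {x y z : V}

lemma linearIndependent_pair_iff :
    LinearIndependent (ZMod 2) ![x, z] ↔ x ≠ 0 ∧ z ≠ 0 ∧ x ≠ z := by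
  simp only [LinearIndependent.pair_iff, forall_zmodTwo, zero_smul, one_smul, add_zero,
    zero_add, one_ne_zero, imp_self, imp_false, true_and, and_true, and_false, ne_eq]
  grind [ZModModule.add_self x]

lemma linearIndependent_triple_iff :
    LinearIndependent (ZMod 2) ![x, y, z] ↔
      x ≠ 0 ∧ y ≠ 0 ∧ z ≠ 0 ∧ x ≠ y ∧ y ≠ z ∧ z ≠ x ∧ x + y + z ≠ 0 := by
  rw [vecCons, linearIndependent_finCons, linearIndependent_pair_iff, range_cons_cons_empty,
    Submodule.mem_span_pair, not_exists, forall_zmodTwo, not_exists, forall_zmodTwo, not_exists,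
    forall_zmodTwo]
  simp only [zero_smul, one_smul, add_zero, zero_add]
  grind [ZModModule.add_self x, ZModModule.add_self y, ZModModule.add_self z]

lemma linearIndependent_pair_iff_mk_ne_zero {s : V} (hs : s ≠ 0) :
    LinearIndependent (ZMod 2) ![s, x] ↔ (Submodule.Quotient.mk x : V ⧸ (ZMod 2 ∙ s)) ≠ 0 := by
  simp only [LinearIndependent.pair_iff' hs, ne_eq, Submodule.Quotient.mk_eq_zero,
    Submodule.mem_span_singleton, not_exists]

variable {n : ℕ}

lemma exists_smul_eq_of_linearIndependent {ι : Type*} {v w : ι → Fin n → ZMod 2}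
    (hv : LinearIndependent (ZMod 2) v) (hw : LinearIndependent (ZMod 2) w) :
    ∃ g : SL(n, ZMod 2), ∀ i, g • v i = w i := by
  obtain ⟨e, he⟩ := Submodule.exists_linearEquiv_restrict_eq
    (hv.linearCombinationEquiv.symm ≪≫ₗ hw.linearCombinationEquiv)
  have eq_one_of_isUnit : ∀ a : ZMod 2, IsUnit a → a = 1 := by decide
  have hdet : (LinearMap.toMatrix' e.toLinearMap).det = 1 := by
    rw [LinearMap.det_toMatrix']
    exact eq_one_of_isUnit _ (LinearEquiv.isUnit_det' e)
  let g : SL(n, ZMod 2) := ⟨LinearMap.toMatrix' e.toLinearMap, hdet⟩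
  refine ⟨g, fun i ↦ ?_⟩
  have hei := he (hv.linearCombinationEquiv (Finsupp.single i 1))
  calc g • v i = LinearMap.toMatrix' e.toLinearMap *ᵥ v i := rfl
    _ = w i := by simpa [LinearMap.toMatrix'_mulVec] using hei.symm

lemma exists_dotProduct_eq_zero_and_one {s x : Fin n → ZMod 2}
    (h : LinearIndependent (ZMod 2) ![s, x]) :
    ∃ φ : Fin n → ZMod 2, φ ⬝ᵥ s = 0 ∧ φ ⬝ᵥ x = 1 := by
  have hs : s ≠ 0 := (linearIndependent_pair_iff.1 h).1
  have hx : x ∉ (ZMod 2) ∙ s := by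
    simpa [Submodule.mem_span_singleton] using (LinearIndependent.pair_iff' hs).1 h
  obtain ⟨f, hfx, hfs⟩ := Submodule.exists_dual_map_eq_bot_of_notMem hx inferInstance
  obtain ⟨φ, rfl⟩ := (dotProductEquiv (ZMod 2) (Fin n)).surjective f
  refine ⟨φ, ?_, (zmodTwo_eq_zero_or_one _).resolve_left hfx⟩
  exact (Submodule.eq_bot_iff _).1 hfs _
    (Submodule.mem_map_of_mem (Submodule.mem_span_singleton_self s))

lemma linearIndependent_single_pair {i j : Fin n} (hij : i ≠ j) :
    LinearIndependent (ZMod 2) ![(Pi.single i 1 : Fin n → ZMod 2), Pi.single j 1] := by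
  have ne_zero : ∀ k : Fin n, (Pi.single k 1 : Fin n → ZMod 2) ≠ 0 :=
    fun k ↦ Pi.single_ne_zero_iff.2 one_ne_zero
  refine linearIndependent_pair_iff.2 ⟨ne_zero i, ne_zero j, fun h ↦ hij ?_⟩
  simpa [Pi.single_apply] using congrFun h i

lemma exists_linearIndependent_triple (hn : 3 ≤ n) :
    ∃ x y z : Fin n → ZMod 2, LinearIndependent (ZMod 2) ![x, y, z] := by
  have h := (Pi.basisFun (ZMod 2) (Fin n)).linearIndependent.comp _ (Fin.castLE_injective hn)
  rw [← FinVec.etaExpand_eq (Pi.basisFun (ZMod 2) (Fin n) ∘ Fin.castLE hn)] at h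
  exact ⟨_, _, _, h⟩

end BinaryVectors

section Shear

variable {ι R : Type*} [Fintype ι] [DecidableEq ι] [CommRing R] {s φ ψ : ι → R}

/-- The transvection `u ↦ u + (φ ⬝ᵥ u) • s` with centre `s` and axis `φ = 0`. -/
def shear (h : φ ⬝ᵥ s = 0) : Matrix.SpecialLinearGroup ι R :=
  ⟨1 + vecMulVec s φ, by
    rw [vecMulVec_eq Unit, det_one_add_replicateCol_mul_replicateRow, h, add_zero]⟩

lemma shear_coe (h : φ ⬝ᵥ s = 0) : (shear h : Matrix ι ι R) = 1 + vecMulVec s φ := rfl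

lemma shear_smul (h : φ ⬝ᵥ s = 0) (u : ι → R) : shear h • u = u + (φ ⬝ᵥ u) • s := by
  rw [Matrix.SpecialLinearGroup.smul_def, shear_coe, smul_eq_mulVec, add_mulVec, one_mulVec,
    vecMulVec_mulVec, op_smul_eq_smul]

lemma shear_mul_shear (h : φ ⬝ᵥ s = 0) (h' : ψ ⬝ᵥ s = 0) :
    shear h * shear h' =
      shear (show (φ + ψ) ⬝ᵥ s = 0 by rw [add_dotProduct, h, h', add_zero]) := by
  apply Subtype.ext
  simp only [coe_mul, shear_coe, mul_add, add_mul, vecMulVec_mul_vecMulVec, h, vecMulVec_add,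
    one_mul, mul_one, zero_smul, vecMulVec_zero]
  abel

lemma shear_zero (h : (0 : ι → R) ⬝ᵥ s = 0) : shear h = 1 :=
  Subtype.ext (by simp [shear_coe])

lemma shear_smul_mul (g : Matrix.SpecialLinearGroup ι R) (h : φ ⬝ᵥ (g • s) = 0) :
    shear h * g = g * shear ((dotProduct_mulVec φ (g : Matrix ι ι R) s).symm.trans h) := by
  apply Subtype.ext
  simp only [coe_mul, shear_coe, add_mul, mul_add, one_mul, mul_one, vecMulVec_mul, mul_vecMulVec,
    Matrix.SpecialLinearGroup.smul_def, smul_eq_mulVec]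

lemma transvection_eq_shear {i j : ι} (hij : i ≠ j) (t : R) :
    𝐞 hij t = shear (show Pi.single j t ⬝ᵥ Pi.single i 1 = 0 by simp [hij]) := by
  apply Subtype.ext
  rw [transvection_coe, shear_coe, ← mul_one t, ← smul_eq_mul, ← smul_single,
    single_eq_single_vecMulVec_single, ← vecMulVec_smul, ← Pi.single_smul]

end Shear

section Weights

variable {K W : Type*} [Field K] [AddCommGroup W] [Module K W] {n : ℕ}
  (τ : Representation K SL(n, ZMod 2) W) {s x u : Fin n → ZMod 2} {w : W}

/-- The nontrivial character of `ZMod 2` (when `-1 ≠ 1` in `K`). -/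
def signChar (K : Type*) [Field K] : AddChar (ZMod 2) K :=
  AddChar.zmodChar 2 (ζ := -1) (by simp)

lemma signChar_one : signChar K 1 = -1 := by
  rw [signChar, AddChar.zmodChar_apply, ZMod.val_one, pow_one]

lemma signChar_mul_self (a : ZMod 2) : signChar K a * signChar K a = 1 := by
  rw [← AddChar.map_add_eq_mul, ZModModule.add_self, AddChar.map_zero_eq_one]

/-- The simultaneous eigenspace of the transvections with centre `s` on which the one with axis
`φ = 0` acts by the sign of `φ ⬝ᵥ x`. -/
def weightSpace (s x : Fin n → ZMod 2) : Submodule K W :=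
  ⨅ φ : {φ : Fin n → ZMod 2 // φ ⬝ᵥ s = 0},
    Module.End.eigenspace (τ (shear φ.2)) (signChar K (φ.1 ⬝ᵥ x))

variable {τ}

lemma mem_weightSpace :
    w ∈ weightSpace τ s x ↔
      ∀ φ (h : φ ⬝ᵥ s = 0), τ (shear h) w = signChar K (φ ⬝ᵥ x) • w := by
  simp only [weightSpace, Submodule.mem_iInf, Module.End.mem_eigenspace_iff, Subtype.forall]

lemma map_mem_weightSpace (g : SL(n, ZMod 2)) (hw : w ∈ weightSpace τ s x) :
    τ g w ∈ weightSpace τ (g • s) (g • x) := by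
  refine mem_weightSpace.2 fun φ h ↦ ?_
  rw [← Module.End.mul_apply, ← map_mul, shear_smul_mul g h, map_mul, Module.End.mul_apply,
    mem_weightSpace.1 hw, map_smul, ← dotProduct_mulVec]
  rfl

lemma sum_finrank_le_of_iSupIndep {ι V : Type*} [Fintype ι] [AddCommGroup V] [Module K V]
    [FiniteDimensional K V] {p : ι → Submodule K V} (hp : iSupIndep p) :
    ∑ i, Module.finrank K (p i) ≤ Module.finrank K V := by
  classical
  rw [← Module.finrank_directSum]
  exact LinearMap.finrank_le_finrank_of_injective hp.dfinsupp_lsum_injective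

lemma finrank_weightSpace_le [FiniteDimensional K W] (g : SL(n, ZMod 2)) :
    Module.finrank K (weightSpace τ s x) ≤ Module.finrank K (weightSpace τ (g • s) (g • x)) :=
  LinearMap.finrank_le_finrank_of_injective
    (f := (τ g).restrict fun _ hw ↦ map_mem_weightSpace g hw)
    fun _ _ h ↦ Subtype.ext ((Representation.apply_bijective τ g).1 (congrArg Subtype.val h))

variable (τ) in
/-- The averaging projection onto `weightSpace τ s x`. -/
def weightProj (s x : Fin n → ZMod 2) : Module.End K W :=
  (Fintype.card {φ : Fin n → ZMod 2 // φ ⬝ᵥ s = 0} : K)⁻¹ •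
    ∑ φ : {φ : Fin n → ZMod 2 // φ ⬝ᵥ s = 0}, signChar K (φ.1 ⬝ᵥ x) • τ (shear φ.2)

lemma weightProj_apply (s x : Fin n → ZMod 2) (w : W) :
    weightProj τ s x w = (Fintype.card {φ : Fin n → ZMod 2 // φ ⬝ᵥ s = 0} : K)⁻¹ •
      ∑ φ : {φ : Fin n → ZMod 2 // φ ⬝ᵥ s = 0}, signChar K (φ.1 ⬝ᵥ x) • τ (shear φ.2) w := by
  simp only [weightProj, LinearMap.smul_apply, LinearMap.sum_apply]

lemma weightProj_mem (s x : Fin n → ZMod 2) (w : W) : weightProj τ s x w ∈ weightSpace τ s x := by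
  rw [weightProj_apply]
  refine Submodule.smul_mem _ _ (mem_weightSpace.2 fun ψ hψ ↦ ?_)
  rw [map_sum, Finset.smul_sum]
  let e : {φ : Fin n → ZMod 2 // φ ⬝ᵥ s = 0} ≃ {φ : Fin n → ZMod 2 // φ ⬝ᵥ s = 0} :=
    (Equiv.addLeft ψ).subtypeEquiv fun φ ↦ by simp [add_dotProduct, hψ]
  refine Fintype.sum_equiv e _ _ fun φ ↦ ?_
  have hsign : signChar K (φ.1 ⬝ᵥ x) =
      signChar K (ψ ⬝ᵥ x) * signChar K (ψ ⬝ᵥ x + φ.1 ⬝ᵥ x) := by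
    rw [AddChar.map_add_eq_mul, ← mul_assoc, signChar_mul_self, one_mul]
  rw [map_smul, ← Module.End.mul_apply, ← map_mul, shear_mul_shear, hsign, ← add_dotProduct,
    mul_smul]
  rfl

variable [CharZero K]

lemma disjoint_weightSpace (h : LinearIndependent (ZMod 2) ![s, x + u]) :
    Disjoint (weightSpace τ s x) (weightSpace τ s u) := by
  refine Submodule.disjoint_def.2 fun w hx hu ↦ ?_
  obtain ⟨φ, hφs, hφ⟩ := exists_dotProduct_eq_zero_and_one h
  have hsign : signChar K (φ ⬝ᵥ x) * signChar K (φ ⬝ᵥ u) = -1 := by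
    rw [← AddChar.map_add_eq_mul, ← dotProduct_add, hφ, signChar_one]
  have := IsAddTorsionFree.of_isTorsionFree K W
  refine self_eq_neg.1 ?_
  calc w = (signChar K (φ ⬝ᵥ x) * signChar K (φ ⬝ᵥ x)) • w := by
        rw [signChar_mul_self, one_smul]
    _ = (signChar K (φ ⬝ᵥ x) * signChar K (φ ⬝ᵥ u)) • w := by
        rw [mul_smul, mul_smul, ← mem_weightSpace.1 hx φ hφs, mem_weightSpace.1 hu φ hφs]
    _ = -w := by rw [hsign, neg_one_smul]

lemma weightProj_eq_self (hw : w ∈ weightSpace τ s x) : weightProj τ s x w = w := by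
  have hterm : ∀ φ : {φ : Fin n → ZMod 2 // φ ⬝ᵥ s = 0},
      signChar K (φ.1 ⬝ᵥ x) • τ (shear φ.2) w = w := fun φ ↦ by
    rw [mem_weightSpace.1 hw, smul_smul, signChar_mul_self, one_smul]
  have hcard : (Fintype.card {φ : Fin n → ZMod 2 // φ ⬝ᵥ s = 0} : K) ≠ 0 :=
    Nat.cast_ne_zero.2 (Fintype.card_pos_iff.2 ⟨0, zero_dotProduct s⟩).ne'
  rw [weightProj_apply, Fintype.sum_congr _ _ hterm, Finset.sum_const, Finset.card_univ,
    ← Nat.cast_smul_eq_nsmul K, inv_smul_smul₀ hcard]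

lemma weightProj_eq_zero (h : LinearIndependent (ZMod 2) ![s, x + u])
    (hw : w ∈ weightSpace τ s u) : weightProj τ s x w = 0 := by
  refine Submodule.disjoint_def.1 (disjoint_weightSpace h) _ (weightProj_mem s x w) ?_
  rw [weightProj_apply]
  refine Submodule.smul_mem _ _ (Submodule.sum_mem _ fun φ _ ↦ Submodule.smul_mem _ _ ?_)
  rw [mem_weightSpace.1 hw]
  exact Submodule.smul_mem _ _ hw

lemma sum_signChar_dotProduct {φ : Fin n → ZMod 2} (h : φ ≠ 0) :
    ∑ x, signChar K (φ ⬝ᵥ x) = 0 := by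
  obtain ⟨i, hi⟩ := Function.ne_iff.1 h
  let χ : AddChar (Fin n → ZMod 2) K :=
    (signChar K).compAddMonoidHom (dotProductEquiv (ZMod 2) (Fin n) φ).toAddMonoidHom
  refine AddChar.sum_eq_zero_of_ne_one (ψ := χ) (AddChar.ne_one_iff.2 ⟨Pi.single i 1, ?_⟩)
  have hχ : χ (Pi.single i 1) = -1 := by
    change signChar K (φ ⬝ᵥ Pi.single i 1) = -1
    rw [dotProduct_single_one, (zmodTwo_eq_zero_or_one _).resolve_left hi, signChar_one]
  rw [hχ]
  norm_num

lemma sum_weightProj (s : Fin n → ZMod 2) (w : W) :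
    ∑ x, weightProj τ s x w =
      ((Fintype.card {φ : Fin n → ZMod 2 // φ ⬝ᵥ s = 0} : K)⁻¹ * 2 ^ n) • w := by
  let zero : {φ : Fin n → ZMod 2 // φ ⬝ᵥ s = 0} := ⟨0, zero_dotProduct s⟩
  simp_rw [weightProj_apply, ← Finset.smul_sum]
  rw [Finset.sum_comm, mul_smul]
  simp_rw [← Finset.sum_smul]
  rw [Fintype.sum_eq_single zero]
  · simp [zero, shear_zero]
  · intro φ hφ
    rw [sum_signChar_dotProduct fun h ↦ hφ (Subtype.ext h), zero_smul]

lemma iSup_weightSpace (s : Fin n → ZMod 2) : ⨆ x, weightSpace τ s x = ⊤ := by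
  refine eq_top_iff.2 fun w _ ↦ ?_
  have hcard : (Fintype.card {φ : Fin n → ZMod 2 // φ ⬝ᵥ s = 0} : K) ≠ 0 :=
    Nat.cast_ne_zero.2 (Fintype.card_pos_iff.2 ⟨0, zero_dotProduct s⟩).ne'
  refine (Submodule.smul_mem_iff _ (mul_ne_zero (inv_ne_zero hcard)
    (pow_ne_zero n two_ne_zero))).1 ?_
  rw [← sum_weightProj]
  exact Submodule.sum_mem _ fun x _ ↦ Submodule.mem_iSup_of_mem x (weightProj_mem s x w)

lemma eq_one_of_weightSpace_eq_bot
    (h : ∀ s x, LinearIndependent (ZMod 2) ![s, x] → weightSpace τ s x = ⊥) : τ = 1 := by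
  have shear_eq_one : ∀ {s φ : Fin n → ZMod 2}, s ≠ 0 → ∀ hφ : φ ⬝ᵥ s = 0,
      τ (shear hφ) = 1 := by
    intro s φ hs hφ
    refine LinearMap.eqLocus_eq_top.1 (eq_top_iff.2 ?_)
    rw [← iSup_weightSpace (τ := τ) s]
    refine iSup_le fun x w hw ↦ ?_
    by_cases hsx : LinearIndependent (ZMod 2) ![s, x]
    · rw [h s x hsx, Submodule.mem_bot] at hw
      rw [hw]
      exact Submodule.zero_mem _
    have hφx : φ ⬝ᵥ x = 0 := by
      obtain rfl | rfl : x = 0 ∨ s = x := by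
        by_contra! hx
        exact hsx (linearIndependent_pair_iff.2 ⟨hs, hx⟩)
      exacts [dotProduct_zero φ, hφ]
    rw [LinearMap.mem_eqLocus, mem_weightSpace.1 hw φ hφ, hφx, AddChar.map_zero_eq_one, one_smul,
      Module.End.one_apply]
  have hker : τ.ker = ⊤ := by
    refine eq_top_of_transvection_mem fun k l hkl t ↦ ?_
    rw [MonoidHom.mem_ker, transvection_eq_shear hkl]
    exact shear_eq_one (Pi.single_ne_zero_iff.2 one_ne_zero) _
  exact MonoidHom.ker_eq_top_iff.1 hker

lemma iSupIndep_weightSpace (hs : s ≠ 0) :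
    iSupIndep fun q : (Fin n → ZMod 2) ⧸ (ZMod 2 ∙ s) ↦ weightSpace τ s q.out := by
  refine fun q ↦ Submodule.disjoint_def.2 fun w hw hw' ↦ ?_
  rw [← weightProj_eq_self hw]
  suffices h : ⨆ r ≠ q, weightSpace τ s r.out ≤ LinearMap.ker (weightProj τ s q.out) from h hw'
  refine iSup₂_le fun r hr u hu ↦ weightProj_eq_zero ?_ hu
  rw [linearIndependent_pair_iff_mk_ne_zero hs, Submodule.Quotient.mk_add,
    Submodule.Quotient.mk_out, Submodule.Quotient.mk_out]
  intro h
  exact hr (by rw [eq_neg_of_add_eq_zero_right h, ZModModule.neg_eq_self])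

lemma finrank_weightSpace_le_one [FiniteDimensional K W]
    (hdim : Module.finrank K W + 2 < 2 ^ n) (h : LinearIndependent (ZMod 2) ![s, x]) :
    Module.finrank K (weightSpace τ s x) ≤ 1 := by
  classical
  have hs : s ≠ 0 := (linearIndependent_pair_iff.1 h).1
  have hle : ∀ q ∈ (Finset.univ : Finset ((Fin n → ZMod 2) ⧸ (ZMod 2 ∙ s))).erase 0,
      Module.finrank K (weightSpace τ s x) ≤ Module.finrank K (weightSpace τ s q.out) := by
    intro q hq
    have hq' : LinearIndependent (ZMod 2) ![s, q.out] := by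
      rw [linearIndependent_pair_iff_mk_ne_zero hs, Submodule.Quotient.mk_out]
      exact Finset.ne_of_mem_erase hq
    obtain ⟨g, hg⟩ := exists_smul_eq_of_linearIndependent h hq'
    have hgs : g • s = s := hg 0
    have hgx : g • x = q.out := hg 1
    calc _ ≤ _ := finrank_weightSpace_le g
      _ = _ := by rw [hgs, hgx]
  have hcard : 2 ^ n = 2 * Fintype.card ((Fin n → ZMod 2) ⧸ (ZMod 2 ∙ s)) := by
    have := Submodule.card_eq_card_quotient_mul_card (ZMod 2 ∙ s)
    rw [Module.natCard_eq_pow_finrank (K := ZMod 2) (V := ZMod 2 ∙ s),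
      finrank_span_singleton hs] at this
    simpa using this
  have hsum := (Finset.card_nsmul_le_sum _ _ _ hle).trans
    ((Finset.sum_le_sum_of_subset (Finset.erase_subset _ _)).trans
      (sum_finrank_le_of_iSupIndep (iSupIndep_weightSpace (τ := τ) hs)))
  rw [Finset.card_erase_of_mem (Finset.mem_univ _), Finset.card_univ, smul_eq_mul] at hsum
  by_contra! hm
  have := Nat.mul_le_mul_left (Fintype.card ((Fin n → ZMod 2) ⧸ (ZMod 2 ∙ s)) - 1) hm
  omega

end Weights

section WeightSystem

variable {K W : Type*} [Field K] [AddCommGroup W] [Module K W] {n : ℕ}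

lemma map_eq_self_of_mem_stdFix {R : Type*} [CommRing R] [IsLocalRing R] {c : ℕ} (hc : c + 3 ≤ n)
    (τ : Representation K SL(n, R) W) {w : W}
    (h : ∀ (k l : Fin n) (hkl : k ≠ l) (t : R), c ≤ (l : ℕ) → ∃ a : K, τ (𝐞 hkl t) w = a • w)
    {g : SL(n, R)} (hg : g ∈ stdFix n R c) : τ g w = w := by
  obtain rfl | hw := eq_or_ne w 0
  · exact map_zero _
  have ne_zero_of_eq_smul : ∀ {g : SL(n, R)} {a : K}, τ g w = a • w → a ≠ 0 := by
    rintro g a ha rfl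
    rw [zero_smul] at ha
    exact hw ((Representation.apply_bijective τ g).1 (ha.trans (map_zero _).symm))
  let H : Subgroup SL(n, R) :=
    (MulAction.stabilizer (Module.End K W)ˣ w).comap (MonoidHom.toHomUnits τ)
  suffices hH : stdFix n R c ≤ H from hH hg
  refine stdFix_le_of_transvection_mem fun k l hkl t hl ↦ ?_
  obtain ⟨p, hp, hpk, hpl⟩ : ∃ p : Fin n, c ≤ p ∧ k ≠ p ∧ p ≠ l := by
    by_contra! hcon
    have h₀ := hcon ⟨c, by omega⟩
    have h₁ := hcon ⟨c + 1, by omega⟩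
    have h₂ := hcon ⟨c + 2, by omega⟩
    simp only [Fin.ext_iff, ne_eq] at h₀ h₁ h₂
    omega
  obtain ⟨a, ha⟩ := h k p hpk t hp
  obtain ⟨b, hb⟩ := h p l hpl 1 hl
  have hcomm := congrArg (fun g ↦ τ g w) (transvection_mul_transvection hpk hpl hkl t 1)
  simp only [map_mul, Module.End.mul_apply, ha, hb, map_smul, mul_one] at hcomm
  rw [smul_comm b a] at hcomm
  exact (smul_right_injective W (ne_zero_of_eq_smul hb)
    (smul_right_injective W (ne_zero_of_eq_smul ha) hcomm)).symm

lemma exists_equivariant_map {G X : Type*} [Group G] [MulAction G X] (τ : Representation K G W)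
    (a : X) {w : W} (hw : ∀ g ∈ MulAction.stabilizer G a, τ g w = w) :
    ∃ v : X → W, (∀ g x, τ g (v x) = v (g • x)) ∧ v a = w ∧
      ∀ x, x ∉ MulAction.orbit G a → v x = 0 := by
  classical
  have hτ : ∀ {g h : G}, g • a = h • a → τ g w = τ h w := by
    intro g h hgh
    have := hw (h⁻¹ * g) (by rw [MulAction.mem_stabilizer_iff, mul_smul, hgh, inv_smul_smul])
    calc τ g w = τ (h * (h⁻¹ * g)) w := by rw [mul_inv_cancel_left]
      _ = τ h w := by rw [map_mul, Module.End.mul_apply, this]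
  let v : X → W := fun x ↦ if hx : x ∈ MulAction.orbit G a then τ hx.choose w else 0
  have hv : ∀ g, v (g • a) = τ g w := fun g ↦ by
    have hx : g • a ∈ MulAction.orbit G a := ⟨g, rfl⟩
    simp only [v, dif_pos hx]
    exact hτ hx.choose_spec
  have hv_zero : ∀ x, x ∉ MulAction.orbit G a → v x = 0 := fun x hx ↦ dif_neg hx
  refine ⟨v, fun g x ↦ ?_, ?_, hv_zero⟩
  · by_cases hx : x ∈ MulAction.orbit G a
    · obtain ⟨h, rfl⟩ := hx
      rw [← mul_smul, hv, hv, map_mul, Module.End.mul_apply]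
    · have hgx : g • x ∉ MulAction.orbit G a := by
        rwa [← MulAction.orbit_eq_iff, MulAction.orbit_smul, MulAction.orbit_eq_iff]
      rw [hv_zero x hx, map_zero, hv_zero _ hgx]
  · simpa using hv 1

variable (τ : Representation K SL(n, ZMod 2) W) (v : (Fin n → ZMod 2) → (Fin n → ZMod 2) → W)

/-- An equivariant family of generators `v x z` of the weight lines `weightSpace τ (x + z) x`,
indexed by ordered pairs of distinct nonzero vectors and extended by zero. -/
structure IsWeightSystem : Prop where
  map_apply : ∀ g x z, τ g (v x z) = v (g • x) (g • z)
  mem_weightSpace : ∀ x z, v x z ∈ weightSpace τ (x + z) x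
  ne_zero : ∀ {x z}, LinearIndependent (ZMod 2) ![x, z] → v x z ≠ 0
  exists_eq_smul : ∀ {x z w}, LinearIndependent (ZMod 2) ![x, z] →
    w ∈ weightSpace τ (x + z) x → ∃ c : K, w = c • v x z
  eq_zero : ∀ {x z}, ¬ LinearIndependent (ZMod 2) ![x, z] → v x z = 0

variable {τ v} {s x z : Fin n → ZMod 2} {w : W}

lemma linearIndependent_smul_pair_iff (g : SL(n, ZMod 2)) :
    LinearIndependent (ZMod 2) ![g • x, g • z] ↔ LinearIndependent (ZMod 2) ![x, z] := by
  simp only [linearIndependent_pair_iff, ne_eq, smul_eq_zero_iff_eq, smul_left_cancel_iff]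

lemma mem_orbit_pair_iff (h : LinearIndependent (ZMod 2) ![s, x]) {y : Fin n → ZMod 2} :
    (y, z) ∈ MulAction.orbit SL(n, ZMod 2) (s, x) ↔ LinearIndependent (ZMod 2) ![y, z] := by
  refine ⟨?_, fun hyz ↦ ?_⟩
  · rintro ⟨g, hg⟩
    obtain ⟨rfl, rfl⟩ := Prod.mk.inj hg
    exact (linearIndependent_smul_pair_iff g).2 h
  · obtain ⟨g, hg⟩ := exists_smul_eq_of_linearIndependent h hyz
    exact ⟨g, Prod.ext (hg 0) (hg 1)⟩

lemma linearIndependent_add_left_iff :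
    LinearIndependent (ZMod 2) ![x + z, x] ↔ LinearIndependent (ZMod 2) ![x, z] := by
  simp only [linearIndependent_pair_iff]
  grind [ZModModule.add_self x, ZModModule.add_self z]

variable [CharZero K]

lemma weightSpace_ne_bot (hτ : τ ≠ 1) (h : LinearIndependent (ZMod 2) ![s, x]) :
    weightSpace τ s x ≠ ⊥ := by
  intro hbot
  refine hτ (eq_one_of_weightSpace_eq_bot fun s' x' h' ↦ eq_bot_iff.2 fun w hw ↦ ?_)
  obtain ⟨g, hg⟩ := exists_smul_eq_of_linearIndependent h' h
  have hgw := map_mem_weightSpace g hw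
  rw [show g • s' = s from hg 0, show g • x' = x from hg 1, hbot, Submodule.mem_bot] at hgw
  exact (Representation.apply_bijective τ g).1 (hgw.trans (map_zero _).symm)

variable [FiniteDimensional K W]

lemma exists_eq_smul_of_mem_weightSpace (hdim : Module.finrank K W + 2 < 2 ^ n)
    (h : LinearIndependent (ZMod 2) ![s, x]) {w' : W} (hw : w ∈ weightSpace τ s x) (hw0 : w ≠ 0)
    (hw' : w' ∈ weightSpace τ s x) : ∃ c : K, w' = c • w := by
  let e : weightSpace τ s x := ⟨w, hw⟩
  have he : e ≠ 0 := fun h ↦ hw0 (congrArg Subtype.val h)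
  have : Nontrivial (weightSpace τ s x) := nontrivial_of_ne e 0 he
  have hfin : Module.finrank K (weightSpace τ s x) = 1 :=
    (finrank_weightSpace_le_one hdim h).antisymm Module.finrank_pos
  obtain ⟨c, hc⟩ := exists_smul_eq_of_finrank_eq_one hfin he ⟨w', hw'⟩
  exact ⟨c, (congrArg Subtype.val hc).symm⟩

lemma map_eq_self_of_smul_eq_self (hn : 5 ≤ n) (hdim : Module.finrank K W + 2 < 2 ^ n)
    {i j : Fin n} (hi : (i : ℕ) = 0) (hj : (j : ℕ) = 1)
    (hw : w ∈ weightSpace τ (Pi.single i 1 + Pi.single j 1) (Pi.single i 1))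
    {g : SL(n, ZMod 2)} (hgi : g • (Pi.single i 1 : Fin n → ZMod 2) = Pi.single i 1)
    (hgj : g • (Pi.single j 1 : Fin n → ZMod 2) = Pi.single j 1) : τ g w = w := by
  obtain rfl | hw0 := eq_or_ne w 0
  · exact map_zero _
  refine map_eq_self_of_mem_stdFix (c := 2) hn τ (fun k l hkl t hl ↦ ?_) ?_
  · have hfix : ∀ {i : Fin n}, (i : ℕ) < 2 →
        𝐞 hkl t • (Pi.single i 1 : Fin n → ZMod 2) = Pi.single i 1 := fun hi ↦
      (mem_fixingSubgroup_iff _).1 (transvection_mem_stdFix hkl hl t) _ ⟨_, hi, rfl⟩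
    refine exists_eq_smul_of_mem_weightSpace hdim ?_ hw hw0 ?_
    · have hij : i ≠ j := fun h ↦ by simp [h, hj] at hi
      exact linearIndependent_add_left_iff.2 (linearIndependent_single_pair hij)
    · have := map_mem_weightSpace (𝐞 hkl t) hw
      rwa [smul_add, hfix (by omega), hfix (by omega)] at this
  · refine (mem_fixingSubgroup_iff _).2 ?_
    rintro _ ⟨l, hl, rfl⟩
    obtain rfl | rfl : l = i ∨ l = j := by
      simp only [Fin.ext_iff]
      have : (l : ℕ) < 2 := hl
      omega
    exacts [hgi, hgj]

lemma exists_isWeightSystem (hn : 5 ≤ n) (hdim : Module.finrank K W + 2 < 2 ^ n) (hτ : τ ≠ 1) :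
    ∃ v, IsWeightSystem τ v := by
  let i : Fin n := ⟨0, by omega⟩
  let j : Fin n := ⟨1, by omega⟩
  have hbase := linearIndependent_single_pair (show i ≠ j by simp [i, j])
  obtain ⟨w, hw, hw0⟩ := (Submodule.ne_bot_iff _).1
    (weightSpace_ne_bot hτ (linearIndependent_add_left_iff.2 hbase))
  obtain ⟨v, hv_map, hv_base, hv_zero⟩ := exists_equivariant_map τ
    ((Pi.single i 1, Pi.single j 1) : (Fin n → ZMod 2) × (Fin n → ZMod 2)) (w := w) fun g hg ↦
      map_eq_self_of_smul_eq_self hn hdim rfl rfl hw (congrArg Prod.fst hg) (congrArg Prod.snd hg)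
  have map_apply : ∀ g x z, τ g (v (x, z)) = v (g • x, g • z) := fun g x z ↦ hv_map g (x, z)
  have exists_eq : ∀ {x z}, LinearIndependent (ZMod 2) ![x, z] →
      ∃ g : SL(n, ZMod 2), g • Pi.single i 1 = x ∧ g • Pi.single j 1 = z ∧ v (x, z) = τ g w := by
    intro x z h
    obtain ⟨g, hg⟩ := (mem_orbit_pair_iff hbase).2 h
    obtain ⟨rfl, rfl⟩ := Prod.mk.inj hg
    exact ⟨g, rfl, rfl, by rw [← hv_base, hv_map]; rfl⟩
  have eq_zero : ∀ {x z}, ¬ LinearIndependent (ZMod 2) ![x, z] → v (x, z) = 0 := fun h ↦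
    hv_zero _ (mt (mem_orbit_pair_iff hbase).1 h)
  have mem : ∀ x z, v (x, z) ∈ weightSpace τ (x + z) x := fun x z ↦ by
    by_cases h : LinearIndependent (ZMod 2) ![x, z]
    · obtain ⟨g, rfl, rfl, hv⟩ := exists_eq h
      rw [hv, ← smul_add]
      exact map_mem_weightSpace g hw
    · rw [eq_zero h]
      exact Submodule.zero_mem _
  have ne_zero : ∀ {x z}, LinearIndependent (ZMod 2) ![x, z] → v (x, z) ≠ 0 := fun h h0 ↦ by
    obtain ⟨g, -, -, hv⟩ := exists_eq h
    exact hw0 ((Representation.apply_bijective τ g).1 ((hv.symm.trans h0).trans (map_zero _).symm))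
  exact ⟨fun x z ↦ v (x, z), map_apply, mem, ne_zero, fun h hu ↦
    exists_eq_smul_of_mem_weightSpace hdim (linearIndependent_add_left_iff.2 h) (mem _ _)
      (ne_zero h) hu, eq_zero⟩

end WeightSystem

section WeightRelations

variable {K W : Type*} [Field K] [AddCommGroup W] [Module K W] {n : ℕ}
  {τ : Representation K SL(n, ZMod 2) W} {s u x y z : Fin n → ZMod 2}

section ShearEquivariant

variable {F : (Fin n → ZMod 2) → W}
  (hF : ∀ φ (h : φ ⬝ᵥ s = 0) u,
    τ (shear h) (F u) = signChar K (φ ⬝ᵥ x) • F (u + (φ ⬝ᵥ u) • s))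

include hF

lemma add_add_self_mem_weightSpace (u : Fin n → ZMod 2) :
    F u + F (u + s) ∈ weightSpace τ s x := by
  refine mem_weightSpace.2 fun φ h ↦ ?_
  rw [map_add, hF, hF, dotProduct_add, h, add_zero, smul_add]
  obtain hu | hu := zmodTwo_eq_zero_or_one (φ ⬝ᵥ u)
  · simp only [hu, zero_smul, add_zero]
  · rw [hu, one_smul, add_assoc u, ZModModule.add_self, add_zero, add_comm]

lemma sub_add_self_mem_weightSpace (u : Fin n → ZMod 2) :
    F u - F (u + s) ∈ weightSpace τ s (x + u) := by
  refine mem_weightSpace.2 fun φ h ↦ ?_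
  rw [map_sub, hF, hF, dotProduct_add φ u, h, add_zero, dotProduct_add, AddChar.map_add_eq_mul]
  obtain hu | hu := zmodTwo_eq_zero_or_one (φ ⬝ᵥ u)
  · simp only [hu, zero_smul, add_zero, AddChar.map_zero_eq_one, mul_one, smul_sub]
  · rw [hu, one_smul, add_assoc u, ZModModule.add_self, add_zero, signChar_one, mul_neg_one,
      neg_smul, smul_sub, neg_sub]

end ShearEquivariant

lemma weight_coeff_ne_zero [CharZero K] {m : ℕ} (hm : 8 ≤ m) {κ α : K}
    (hκ : κ = 1 ∨ κ = -2) (hα : α = 1 ∨ α = -2) : 2 + κ + (m - 4) * α ≠ 0 := by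
  have hlift {a : K} (ha : a = 1 ∨ a = -2) : ∃ b : ℤ, (b = 1 ∨ b = -2) ∧ (b : K) = a := by
    obtain rfl | rfl := ha
    exacts [⟨1, .inl rfl, by norm_num⟩, ⟨-2, .inr rfl, by norm_num⟩]
  obtain ⟨k, hk, rfl⟩ := hlift hκ
  obtain ⟨a, ha, rfl⟩ := hlift hα
  intro h
  have h : 2 + k + ((m : ℤ) - 4) * a = 0 := by exact_mod_cast h
  obtain rfl | rfl := hk <;> obtain rfl | rfl := ha <;> lia

namespace IsWeightSystem

variable {v : (Fin n → ZMod 2) → (Fin n → ZMod 2) → W} (hv : IsWeightSystem τ v)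

include hv

lemma zero_left (z : Fin n → ZMod 2) : v 0 z = 0 :=
  hv.eq_zero fun h ↦ (linearIndependent_pair_iff.1 h).1 rfl

lemma zero_right (x : Fin n → ZMod 2) : v x 0 = 0 :=
  hv.eq_zero fun h ↦ (linearIndependent_pair_iff.1 h).2.1 rfl

lemma self_self (x : Fin n → ZMod 2) : v x x = 0 :=
  hv.eq_zero fun h ↦ (linearIndependent_pair_iff.1 h).2.2 rfl

lemma swap (x z : Fin n → ZMod 2) : v z x = -v x z := by
  by_cases h : LinearIndependent (ZMod 2) ![x, z]
  · obtain ⟨φ, hφ, hφx⟩ :=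
      exists_dotProduct_eq_zero_and_one (linearIndependent_add_left_iff.2 h)
    have hφz : φ ⬝ᵥ z = 1 := by
      rw [dotProduct_add, hφx] at hφ
      rw [eq_neg_of_add_eq_zero_right hφ, ZMod.neg_eq_self_mod_two]
    have hx : x + (x + z) = z := by rw [← add_assoc, ZModModule.add_self, zero_add]
    have hz : z + (x + z) = x := by rw [add_left_comm, ZModModule.add_self, add_zero]
    have hmem := SLRep.mem_weightSpace.1 (hv.mem_weightSpace x z) φ hφ
    rwa [hv.map_apply, shear_smul, shear_smul, hφx, hφz, one_smul, hx, hz, signChar_one,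
      neg_one_smul] at hmem
  · rw [hv.eq_zero h, neg_zero, hv.eq_zero]
    rwa [LinearIndependent.pair_symm_iff]

lemma map_shear_add (y : Fin n → ZMod 2) {φ : Fin n → ZMod 2} (h : φ ⬝ᵥ (x + z) = 0) :
    τ (shear h) (v x y + v y z) =
      signChar K (φ ⬝ᵥ x) • (v x (y + (φ ⬝ᵥ y) • (x + z)) + v (y + (φ ⬝ᵥ y) • (x + z)) z) := by
  have hφz : φ ⬝ᵥ z = φ ⬝ᵥ x := by
    rw [dotProduct_add] at h
    rw [eq_neg_of_add_eq_zero_right h, ZMod.neg_eq_self_mod_two]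
  rw [map_add, hv.map_apply, hv.map_apply, shear_smul, shear_smul, shear_smul, hφz]
  generalize y + (φ ⬝ᵥ y) • (x + z) = y'
  obtain hx | hx := zmodTwo_eq_zero_or_one (φ ⬝ᵥ x)
  · simp only [hx, zero_smul, add_zero, AddChar.map_zero_eq_one, one_smul]
  · have hxs : x + (x + z) = z := by rw [← add_assoc, ZModModule.add_self, zero_add]
    have hzs : z + (x + z) = x := by rw [add_left_comm, ZModModule.add_self, add_zero]
    rw [hx, one_smul, hxs, hzs, signChar_one, neg_one_smul, hv.swap y' z, hv.swap x y']
    abel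

lemma exists_line_coeff (hn : 3 ≤ n) :
    ∃ κ : K, ∀ {x z}, LinearIndependent (ZMod 2) ![x, z] →
      v x (x + z) + v (x + z) z = κ • v x z := by
  obtain ⟨x, z, y, h⟩ := exists_linearIndependent_triple hn
  have hxz : LinearIndependent (ZMod 2) ![x, z] := by
    rw [linearIndependent_triple_iff] at h
    exact linearIndependent_pair_iff.2 (by tauto)
  have hmem := add_add_self_mem_weightSpace
    (F := fun y ↦ v x y + v y z) (fun φ h y ↦ hv.map_shear_add y h) (x + z)
  rw [ZModModule.add_self, hv.zero_left, hv.zero_right, add_zero, add_zero] at hmem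
  obtain ⟨κ, hκ⟩ := hv.exists_eq_smul hxz hmem
  refine ⟨κ, fun {x' z'} hxz' ↦ ?_⟩
  obtain ⟨g, hg⟩ := exists_smul_eq_of_linearIndependent hxz hxz'
  obtain ⟨rfl, rfl⟩ : g • x = x' ∧ g • z = z' := ⟨hg 0, hg 1⟩
  have := congrArg (τ g) hκ
  rwa [map_add, map_smul, hv.map_apply, hv.map_apply, hv.map_apply, smul_add] at this

lemma line_coeff_eq (hn : 3 ≤ n) {κ : K}
    (hκ : ∀ {x z}, LinearIndependent (ZMod 2) ![x, z] →
      v x (x + z) + v (x + z) z = κ • v x z) : κ = 1 ∨ κ = -2 := by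
  obtain ⟨x, z, y, h⟩ := exists_linearIndependent_triple hn
  have hxz : LinearIndependent (ZMod 2) ![x, z] := by
    rw [linearIndependent_triple_iff] at h
    exact linearIndependent_pair_iff.2 (by tauto)
  have hxs : LinearIndependent (ZMod 2) ![x, x + z] := by
    rw [linearIndependent_pair_iff] at hxz ⊢
    grind [ZModModule.add_self x, ZModModule.add_self z]
  have hsz : LinearIndependent (ZMod 2) ![x + z, z] := by
    rw [linearIndependent_pair_iff] at hxz ⊢
    grind [ZModModule.add_self x, ZModModule.add_self z]
  have h₁ := hκ hxz
  have h₂ := hκ hxs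
  have h₃ := hκ hsz
  rw [← add_assoc, ZModModule.add_self, zero_add, hv.swap (x + z) z] at h₂
  rw [add_assoc, ZModModule.add_self, add_zero, hv.swap x (x + z)] at h₃
  have hrel : ((κ - 1) * (κ + 2)) • v x z = 0 := by
    linear_combination (norm := module) -(κ + 1) • h₁ - h₂ - h₃
  obtain h | h := mul_eq_zero.1 ((smul_eq_zero.1 hrel).resolve_right (hv.ne_zero hxz))
  exacts [.inl (sub_eq_zero.1 h), .inr (eq_neg_of_add_eq_zero_left h)]

lemma map_sum_apply (g : SL(n, ZMod 2)) (x : Fin n → ZMod 2) :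
    τ g (∑ y, v x y) = ∑ y, v (g • x) y := by
  rw [map_sum]
  exact Fintype.sum_equiv (MulAction.toPerm g) _ _ fun y ↦ hv.map_apply g x y

lemma map_shear_sum {φ : Fin n → ZMod 2} (h : φ ⬝ᵥ s = 0) (u : Fin n → ZMod 2) :
    τ (shear h) (∑ y, v u y) = signChar K (φ ⬝ᵥ 0) • ∑ y, v (u + (φ ⬝ᵥ u) • s) y := by
  rw [hv.map_sum_apply, shear_smul, dotProduct_zero, AddChar.map_zero_eq_one, one_smul]

lemma sum_triangle_defect_eq_smul {κ α β : K}
    (hκ : ∀ {x z}, LinearIndependent (ZMod 2) ![x, z] →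
      v x (x + z) + v (x + z) z = κ • v x z)
    (hαβ : ∀ {x y z}, LinearIndependent (ZMod 2) ![x, y, z] →
      v x y + v y z = α • v x z + β • v (x + y) (y + z))
    (h : LinearIndependent (ZMod 2) ![x, z]) :
    ∑ y, (v x y + v y z - α • v x z - β • v (x + y) (y + z)) = (2 + κ - 4 * α) • v x z := by
  obtain ⟨hx, hz, hxz⟩ := linearIndependent_pair_iff.1 h
  have hgen : ∀ y ∉ ({0, x, z, x + z} : Finset (Fin n → ZMod 2)),
      v x y + v y z - α • v x z - β • v (x + y) (y + z) = 0 := fun y hy ↦ by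
    simp only [Finset.mem_insert, Finset.mem_singleton, not_or] at hy
    rw [hαβ (linearIndependent_triple_iff.2 (by grind [ZModModule.add_self y]))]
    abel
  rw [← Finset.sum_subset (Finset.subset_univ {0, x, z, x + z}) fun y _ ↦ hgen y,
    Finset.sum_insert, Finset.sum_insert, Finset.sum_insert, Finset.sum_singleton]
  · have hz' : x + z + z = x := by rw [add_assoc, ZModModule.add_self, add_zero]
    have hx' : x + (x + z) = z := by rw [← add_assoc, ZModModule.add_self, zero_add]
    simp only [hv.zero_left, hv.zero_right, hv.self_self, add_zero, zero_add, hx', hz', hκ h,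
      ZModModule.add_self, hv.swap x z]
    module
  · simpa only [Finset.mem_singleton, right_eq_add] using hx
  · simp only [Finset.mem_insert, Finset.mem_singleton, left_eq_add, not_or]
    exact ⟨hxz, hz⟩
  · simp only [Finset.mem_insert, Finset.mem_singleton, not_or]
    grind [ZModModule.add_self x]

variable [CharZero K]

lemma exists_triangle_coeff (hn : 3 ≤ n) :
    ∃ α β : K, ∀ {x y z}, LinearIndependent (ZMod 2) ![x, y, z] →
      v x y + v y z = α • v x z + β • v (x + y) (y + z) := by
  obtain ⟨x, y, z, h⟩ := exists_linearIndependent_triple hn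
  have hxz : LinearIndependent (ZMod 2) ![x, z] := by
    rw [linearIndependent_triple_iff] at h
    exact linearIndependent_pair_iff.2 (by tauto)
  have hxy : LinearIndependent (ZMod 2) ![x + y, y + z] := by
    rw [linearIndependent_triple_iff] at h
    rw [linearIndependent_pair_iff]
    grind [ZModModule.add_self x, ZModModule.add_self y, ZModModule.add_self z]
  have hs : x + y + (y + z) = x + z := by
    rw [add_assoc, ← add_assoc y, ZModModule.add_self, zero_add]
  have hF : ∀ φ (h : φ ⬝ᵥ (x + z) = 0) y, _ := fun φ h y ↦ hv.map_shear_add y h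
  obtain ⟨a, ha⟩ := hv.exists_eq_smul hxz (add_add_self_mem_weightSpace hF y)
  obtain ⟨b, hb⟩ := hv.exists_eq_smul hxy (hs ▸ sub_add_self_mem_weightSpace hF y)
  rw [hs] at hb
  have hab : v x y + v y z = (a / 2) • v x z + (b / 2) • v (x + y) (y + z) := by
    linear_combination (norm := module) (1 / 2 : K) • (ha + hb)
  refine ⟨a / 2, b / 2, fun {x' y' z'} h' ↦ ?_⟩
  obtain ⟨g, hg⟩ := exists_smul_eq_of_linearIndependent h h'
  obtain ⟨rfl, rfl, rfl⟩ : g • x = x' ∧ g • y = y' ∧ g • z = z' := ⟨hg 0, hg 1, hg 2⟩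
  simpa only [map_add, map_smul, hv.map_apply, smul_add] using congrArg (τ g) hab

lemma triangle_coeff_eq (hn : 3 ≤ n) {α β : K}
    (hαβ : ∀ {x y z}, LinearIndependent (ZMod 2) ![x, y, z] →
      v x y + v y z = α • v x z + β • v (x + y) (y + z)) : α = 1 ∨ α = -2 := by
  obtain ⟨κ, hκ⟩ := hv.exists_line_coeff hn
  obtain ⟨x, y, z, h⟩ := exists_linearIndependent_triple hn
  have hxyz := linearIndependent_triple_iff.1 h
  have h₁ := hαβ h
  have h₂ := hαβ (x := y) (y := z) (z := x) (by
    rw [linearIndependent_triple_iff]; grind)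
  have h₃ := hαβ (x := z) (y := x) (z := y) (by
    rw [linearIndependent_triple_iff]; grind)
  have hs : x + y + (y + z) = z + x := by grind [ZModModule.add_self y]
  have h₄ := hκ (x := x + y) (z := y + z) (by
    rw [linearIndependent_pair_iff]
    grind [ZModModule.add_self x, ZModModule.add_self y, ZModModule.add_self z])
  rw [hs, hv.swap (z + x) (x + y), hv.swap (y + z) (z + x)] at h₄
  rw [hv.swap z x] at h₁
  rw [hv.swap x y] at h₂
  rw [hv.swap y z] at h₃
  have hrel : ((2 + α) * (1 - α)) • v z x =
      (-(1 + α + κ) * β) • v (x + y) (y + z) := by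
    linear_combination (norm := module) h₂ + h₃ - (1 + α) • h₁ - β • h₄
  have hzero : ((2 + α) * (1 - α)) • v z x = 0 := by
    have hdisj : LinearIndependent (ZMod 2) ![z + x, z + (x + y)] := by
      rw [linearIndependent_pair_iff]
      grind [ZModModule.add_self x, ZModModule.add_self y, ZModModule.add_self z]
    refine Submodule.disjoint_def.1 (disjoint_weightSpace hdisj) _
      (Submodule.smul_mem _ _ (hv.mem_weightSpace z x)) ?_
    rw [hrel, ← hs]
    exact Submodule.smul_mem _ _ (hv.mem_weightSpace (x + y) (y + z))
  have hzx : v z x ≠ 0 := hv.ne_zero (linearIndependent_pair_iff.2 (by tauto))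
  obtain h | h := mul_eq_zero.1 ((smul_eq_zero.1 hzero).resolve_right hzx)
  exacts [.inr (eq_neg_of_add_eq_zero_right h), .inl (sub_eq_zero.1 h).symm]

lemma sum_apply_add_add (x z : Fin n → ZMod 2) : ∑ y, v (x + y) (y + z) = 0 := by
  have := IsAddTorsionFree.of_isTorsionFree K W
  rw [← self_eq_neg, ← Finset.sum_neg_distrib]
  refine Fintype.sum_equiv (Equiv.addRight (x + z)) _ _ fun y ↦ ?_
  have hx : x + (y + (x + z)) = y + z := by grind [ZModModule.add_self x]
  have hz : y + (x + z) + z = x + y := by grind [ZModModule.add_self z]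
  rw [Equiv.coe_addRight, hx, hz, ← hv.swap]

lemma sum_sub_sum_eq_smul {κ α β : K}
    (hκ : ∀ {x z}, LinearIndependent (ZMod 2) ![x, z] →
      v x (x + z) + v (x + z) z = κ • v x z)
    (hαβ : ∀ {x y z}, LinearIndependent (ZMod 2) ![x, y, z] →
      v x y + v y z = α • v x z + β • v (x + y) (y + z))
    (h : LinearIndependent (ZMod 2) ![x, z]) :
    ∑ y, v x y - ∑ y, v z y = (2 + κ + (2 ^ n - 4) * α) • v x z := by
  have hdefect := hv.sum_triangle_defect_eq_smul hκ hαβ h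
  have hcard : (Finset.univ : Finset (Fin n → ZMod 2)).card = 2 ^ n := by simp [ZMod.card]
  have hswap : ∑ y, v y z = -∑ y, v z y := by
    rw [← Finset.sum_neg_distrib]
    exact Finset.sum_congr rfl fun y _ ↦ hv.swap z y
  rw [Finset.sum_sub_distrib, Finset.sum_sub_distrib, Finset.sum_add_distrib,
    ← Finset.smul_sum (r := β), hv.sum_apply_add_add, smul_zero, sub_zero, Finset.sum_const, hcard,
    ← Nat.cast_smul_eq_nsmul K, hswap] at hdefect
  push_cast at hdefect
  linear_combination (norm := module) hdefect

lemma exists_sum_sub_sum_eq (hn : 3 ≤ n) :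
    ∃ c : K, c ≠ 0 ∧ ∀ {x z}, LinearIndependent (ZMod 2) ![x, z] →
      ∑ y, v x y - ∑ y, v z y = c • v x z := by
  obtain ⟨κ, hκ⟩ := hv.exists_line_coeff hn
  obtain ⟨α, β, hαβ⟩ := hv.exists_triangle_coeff hn
  refine ⟨_, ?_, hv.sum_sub_sum_eq_smul hκ hαβ⟩
  have hpow : 8 ≤ 2 ^ n := Nat.pow_le_pow_right two_pos hn
  have := weight_coeff_ne_zero (K := K) hpow (hv.line_coeff_eq hn hκ) (hv.triangle_coeff_eq hn hαβ)
  simpa using this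

lemma weightProj_sum_eq_zero (hx : LinearIndependent (ZMod 2) ![s, x])
    (hxu : LinearIndependent (ZMod 2) ![s, x + u]) :
    weightProj τ s x (∑ y, v u y) = 0 := by
  have hF : ∀ φ (h : φ ⬝ᵥ s = 0) u, _ := fun φ h u ↦ hv.map_shear_sum h u
  have hadd := weightProj_eq_zero (x := x) (by rwa [add_zero]) (add_add_self_mem_weightSpace hF u)
  have hsub := weightProj_eq_zero (x := x) (by rwa [zero_add]) (sub_add_self_mem_weightSpace hF u)
  rw [map_add] at hadd
  rw [map_sub] at hsub
  linear_combination (norm := module) (1 / 2 : K) • (hadd + hsub)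

lemma two_smul_weightProj_sum {c : K} (hc : ∀ {x z}, LinearIndependent (ZMod 2) ![x, z] →
      ∑ y, v x y - ∑ y, v z y = c • v x z) (h : LinearIndependent (ZMod 2) ![x, z]) :
    (2 : K) • weightProj τ (x + z) x (∑ y, v x y) = c • v x z := by
  have hadd := weightProj_eq_zero (x := x) (by rwa [add_zero, linearIndependent_add_left_iff])
    (add_add_self_mem_weightSpace (fun φ h u ↦ hv.map_shear_sum h u) x)
  have hsub := congrArg (weightProj τ (x + z) x) (hc h)
  rw [← add_assoc, ZModModule.add_self, zero_add, map_add] at hadd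
  rw [map_sub, map_smul, weightProj_eq_self (hv.mem_weightSpace x z)] at hsub
  linear_combination (norm := module) hadd + hsub

lemma linearIndependent_sum (hn : 3 ≤ n) {x : Fin n → ZMod 2} (hx : x ≠ 0) :
    LinearIndependent K fun u : ({0, x}ᶜ : Finset (Fin n → ZMod 2)) ↦ ∑ y, v u y := by
  obtain ⟨c, hc₀, hc⟩ := hv.exists_sum_sub_sum_eq hn
  refine Fintype.linearIndependent_iff.2 fun f hf ⟨u, hu⟩ ↦ ?_
  simp only [Finset.mem_compl, Finset.mem_insert, Finset.mem_singleton, not_or] at hu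
  have hux : LinearIndependent (ZMod 2) ![u, x] := linearIndependent_pair_iff.2 ⟨hu.1, hx, hu.2⟩
  have hproj := congrArg (weightProj τ (u + x) u) hf
  rw [map_sum, map_zero, Finset.sum_eq_single ⟨u, by simpa using hu⟩ ?_ (by simp), map_smul]
    at hproj
  · have hzero : f ⟨u, by simpa using hu⟩ • c • v u x = 0 := by
      rw [← hv.two_smul_weightProj_sum hc hux, smul_comm, hproj, smul_zero]
    exact (smul_eq_zero.1 hzero).resolve_right (smul_ne_zero hc₀ (hv.ne_zero hux))
  · rintro ⟨t, ht⟩ - htu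
    simp only [Finset.mem_compl, Finset.mem_insert, Finset.mem_singleton, not_or, ne_eq,
      Subtype.mk.injEq] at ht htu
    rw [map_smul, hv.weightProj_sum_eq_zero (linearIndependent_add_left_iff.2 hux), smul_zero]
    rw [linearIndependent_pair_iff]
    grind [ZModModule.add_self u]

theorem two_pow_le_finrank_add_two [FiniteDimensional K W] (hn : 3 ≤ n) :
    2 ^ n ≤ Module.finrank K W + 2 := by
  have hx : (Pi.single ⟨0, by lia⟩ 1 : Fin n → ZMod 2) ≠ 0 := by simp
  have hcard := (hv.linearIndependent_sum hn hx).fintype_card_le_finrank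
  rw [Fintype.card_coe, Finset.card_compl, Finset.card_pair hx.symm] at hcard
  simp only [Fintype.card_pi_const, ZMod.card] at hcard
  lia

end IsWeightSystem

theorem eq_one_of_finrank_lt [CharZero K] [FiniteDimensional K W] (hn : 5 ≤ n)
    (hdim : Module.finrank K W + 2 < 2 ^ n) : τ = 1 := by
  by_contra hτ
  obtain ⟨v, hv⟩ := exists_isWeightSystem hn hdim hτ
  exact hdim.not_ge (hv.two_pow_le_finrank_add_two (by lia))

end WeightRelations

section MatrixRepresentations

variable {G K ι : Type*} [Group G] [Field K] [Fintype ι] [DecidableEq ι]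

/-- A homomorphism to `GL ι K`, seen as a representation on the space of column vectors. -/
abbrev toRepresentation (ρ : G →* GL ι K) : Representation K G (ι → K) :=
  (toLinAlgEquiv' : Matrix ι ι K ≃ₐ[K] _).toMonoidHom.comp ((Units.coeHom _).comp ρ)

lemma isNilpotent_toRepresentation_sub_one_iff {ρ : G →* GL ι K} {g : G} :
    IsNilpotent (toRepresentation ρ g - 1) ↔ IsNilpotent ((ρ g).1 - 1) := by
  rw [← isNilpotent_toLin'_iff, map_sub, toLin'_one]
  rfl

lemma eq_one_of_toRepresentation_eq_one {ρ : G →* GL ι K} (h : toRepresentation ρ = 1) : ρ = 1 :=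
  MonoidHom.ext fun g ↦ Units.ext <|
    (toLinAlgEquiv' : Matrix ι ι K ≃ₐ[K] _).injective <|
      (DFunLike.congr_fun h g).trans (map_one _).symm

end MatrixRepresentations

section Extension

variable {n N : ℕ}

open scoped Matrix.Norms.Operator in
theorem exists_isAlgebraicSL_eq_mul (hn : 3 ≤ n) (ρ : SL(n, ℤ) →* GL (Fin N) ℂ)
    (hρ : ∀ {i j : Fin n} (hij : i ≠ j), IsNilpotent ((ρ (𝐞 hij 2)).1 - 1)) :
    ∃ r : SL(n, ℂ) →* GL (Fin N) ℂ, IsAlgebraicSL r ∧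
      ∃ σ : SL(n, ZMod 2) →* GL (Fin N) ℂ, ∀ γ, ρ γ = σ (modTwo n γ) * r (toComplex n γ) := by
  obtain ⟨S, hS⟩ := exists_steinbergSystem ρ hρ
  obtain ⟨r, hr⟩ := S.exists_hom hn
  have hrX {i j : Fin n} (hij : i ≠ j) (t : ℂ) : (r (𝐞 hij t)).1 = S.X hij t :=
    congrArg Units.val (hr (S.lift hij t) (Subgroup.subset_closure ⟨i, j, hij, t, rfl⟩))
  refine ⟨r, fun i j ↦ ?_, exists_eq_mul_of_eq_transvection_two hn (fun hij ↦ ?_) fun hij ↦ ?_⟩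
  · obtain ⟨P, hP⟩ := mem_regularFunctions.1
      (hom_mem_matrixFunctions (fun hij ↦ (hS hij).1) hr i j)
    exact ⟨P, fun g ↦ (hP g).symm⟩
  · simpa only [hrX] using (hS hij).1
  · simpa only [Nat.cast_one, mul_one, ← hrX, Units.val_inj, eq_comm] using (hS hij).2 1

lemma two_pow_lt_two_mul_three_pow (hn : 5 ≤ n) : 2 ^ n < 2 * 3 ^ (n - 2) := by
  obtain ⟨k, rfl⟩ := Nat.exists_eq_add_of_le hn
  calc 2 ^ (5 + k) = 2 * (16 * 2 ^ k) := by ring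
    _ < 2 * (27 * 2 ^ k) := by gcongr; norm_num
    _ ≤ 2 * (27 * 3 ^ k) := by gcongr; norm_num
    _ = 2 * 3 ^ (5 + k - 2) := by rw [show 5 + k - 2 = 3 + k by lia]; ring

theorem isNilpotent_transvection_two_sub_one_of_lt (hn : 5 ≤ n) (hdim : N < 2 ^ n)
    (ρ : SL(n, ℤ) →* GL (Fin N) ℂ) {i j : Fin n} (hij : i ≠ j) :
    IsNilpotent ((ρ (𝐞 hij 2)).1 - 1) := by
  refine isNilpotent_toRepresentation_sub_one_iff.1
    (isNilpotent_transvection_two_sub_one (by lia) _ ?_ hij)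
  rw [Module.finrank_fin_fun]
  exact hdim.trans (two_pow_lt_two_mul_three_pow hn)

theorem eq_one_of_lt_two_pow_sub_two (hn : 5 ≤ n) (hdim : N < 2 ^ n - 2)
    (σ : SL(n, ZMod 2) →* GL (Fin N) ℂ) : σ = 1 := by
  refine eq_one_of_toRepresentation_eq_one (eq_one_of_finrank_lt hn ?_)
  rw [Module.finrank_fin_fun]
  lia

end Extension

end SLRep

/-- For `n ≥ 5`, any complex representation of `SL_n(ℤ)` of dimension less than
`2^n − 2` extends (not just virtually) to an algebraic representation of `SL_n(ℂ)`. -/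
theorem lowDim_extends_to_algebraic (n N : ℕ) (hn : 5 ≤ n) (hdim : N < 2 ^ n - 2)
    (ρ : Matrix.SpecialLinearGroup (Fin n) ℤ →* GL (Fin N) ℂ) :
    ∃ ρ' : Matrix.SpecialLinearGroup (Fin n) ℂ →* GL (Fin N) ℂ,
      IsAlgebraicSL ρ' ∧
      ρ = ρ'.comp (Matrix.SpecialLinearGroup.map (Int.castRingHom ℂ)) := by
  have hunipotent {i j : Fin n} (hij : i ≠ j) :=
    SLRep.isNilpotent_transvection_two_sub_one_of_lt hn (by lia) ρ hij
  obtain ⟨r, hr, σ, hσ⟩ := SLRep.exists_isAlgebraicSL_eq_mul (by lia) ρ hunipotent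
  refine ⟨r, hr, MonoidHom.ext fun γ ↦ ?_⟩
  rw [hσ, SLRep.eq_one_of_lt_two_pow_sub_two hn hdim σ, MonoidHom.one_apply, one_mul]
  rfl
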